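/- Let 1 < q < ∞, r ≥ 1 with |1/q − 1/2| < 1/r, and ε > 0. Suppose Υ is a finite collection of pairwise disjoint subintervals of ℝ⁺ and, for each υ ∈ Υ, m_υ is a function supported on υ with ‖m_υ‖_{V^r} < ∞. Then ‖ Σ_{υ∈Υ} m_υ ‖_{M^q} ≤ C_{q,r,ε} |Υ|^{|1/q − 1/2| + ε} · sup_{υ∈Υ} ‖m_υ‖_{V^r}. -/

import Mathlib

open MeasureTheory Set Filter
open scoped ENNReal NNReal Classical BigOperators RealInnerProductSpace

noncomputable section

/-- The binary digit of `x` in position `n+1` to the left of the point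
(terminating expansion for dyadic rationals). -/
def digit (n : ℤ) (x : ℝ) : ℤ := ⌊x / 2 ^ n⌋ % 2

/-- Bitwise addition `⊕` on nonnegative reals. -/
def wXor (x y : ℝ) : ℝ := ∑' n : ℤ, (((digit n x + digit n y) % 2 : ℤ) : ℝ) * 2 ^ n

/-- The `n`-th digit of the bitwise product `x ⊗ y`. -/
def wMulDigit (n : ℤ) (x y : ℝ) : ℤ :=
  ⌊∑' m : ℤ, ((digit (n - m) x * digit m y : ℤ) : ℝ)⌋ % 2

/-- Bitwise multiplication `⊗` on nonnegative reals. -/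
def wMul (x y : ℝ) : ℝ := ∑' n : ℤ, ((wMulDigit n x y : ℤ) : ℝ) * 2 ^ n

/-- The Walsh character `e(x) = exp (i π d₋₁(x))`. -/
def walshe (x : ℝ) : ℝ := (-1 : ℝ) ^ (digit (-1) x)

/-- The Walsh–Fourier transform on `ℝ⁺`; it is involutive, so it also serves
as the inverse Walsh–Fourier transform `ˇ`. -/
def walshFT (f : ℝ → ℝ) (ξ : ℝ) : ℝ := ∫ x in Set.Ici (0 : ℝ), walshe (wMul ξ x) * f x

/-- Lebesgue measure on `ℝ⁺`. -/
def μplus : Measure ℝ := volume.restrict (Set.Ici 0)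

/-- `L^p` norm (real exponent `p`) of an `ℝ≥0∞`-valued function. -/
def lpNormE (p : ℝ) (μ : Measure ℝ) (F : ℝ → ℝ≥0∞) : ℝ≥0∞ := (∫⁻ x, F x ^ p ∂μ) ^ (1 / p)

/-- The `r`-variation norm of `m` on the domain `D`. -/
def vnorm {ι E : Type*} [LinearOrder ι] [NormedAddCommGroup E] (r : ℝ) (D : Set ι)
    (m : ι → E) : ℝ≥0∞ :=
  (⨆ ξ ∈ D, (‖m ξ‖₊ : ℝ≥0∞)) +
    ⨆ (N : ℕ) (u : Fin (N + 1) → ι) (_ : StrictMono u) (_ : ∀ i, u i ∈ D),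
      (∑ i : Fin N, (‖m (u i.succ) - m (u i.castSucc)‖₊ : ℝ≥0∞) ^ r) ^ (1 / r)

/-- The Walsh `L^q`-multiplier norm. -/
def Mq (q : ℝ) (m : ℝ → ℝ) : ℝ≥0∞ :=
  ⨆ (g : ℝ → ℝ) (_ : eLpNorm g (ENNReal.ofReal q) μplus = 1),
    eLpNorm (walshFT fun ξ => m ξ * walshFT g ξ) (ENNReal.ofReal q) μplus

/-- The Walsh `L^q`-maximal-multiplier norm of a sequence of multipliers. -/
def Mqstar (q : ℝ) (m : ℤ → ℝ → ℝ) : ℝ≥0∞ :=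
  ⨆ (g : ℝ → ℝ) (_ : eLpNorm g (ENNReal.ofReal q) μplus = 1),
    lpNormE q μplus fun x => ⨆ k : ℤ, (‖walshFT (fun ξ => m k ξ * walshFT g ξ) x‖₊ : ℝ≥0∞)

/-- The `s`-variation `L^q`-multiplier norm of a sequence of multipliers. -/
def Mqs (q s : ℝ) (m : ℤ → ℝ → ℝ) : ℝ≥0∞ :=
  ⨆ (g : ℝ → ℝ) (_ : eLpNorm g (ENNReal.ofReal q) μplus = 1),
    lpNormE q μplus fun x =>
      vnorm s (Set.univ : Set ℤ) fun k => walshFT (fun ξ => m k ξ * walshFT g ξ) x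

/-- Dyadic intervals `[n 2^k, (n+1) 2^k)`. -/
def IsDyadic (I : Set ℝ) : Prop :=
  ∃ n k : ℤ, I = Set.Ico ((n : ℝ) * 2 ^ k) (((n : ℝ) + 1) * 2 ^ k)

/-- Dyadic intervals of length `2^k`. -/
def IsDyadicLen (k : ℤ) (ω : Set ℝ) : Prop :=
  ∃ n : ℤ, ω = Set.Ico ((n : ℝ) * 2 ^ k) (((n : ℝ) + 1) * 2 ^ k)

/-- The lower half of an interval. -/
def lowerHalf (ω : Set ℝ) : Set ℝ := ω ∩ Set.Iio ((sInf ω + sSup ω) / 2)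

/-- The upper half of an interval. -/
def upperHalf (ω : Set ℝ) : Set ℝ := ω ∩ Set.Ici ((sInf ω + sSup ω) / 2)

/-- A bitile `I × ω ⊆ ℝ⁺ × ℝ⁺` : a rectangle of dyadic intervals of area `2`. -/
structure Bitile where
  I : Set ℝ
  ω : Set ℝ
  hI : IsDyadic I
  hω : IsDyadic ω
  hIsub : I ⊆ Set.Ici 0
  hωsub : ω ⊆ Set.Ici 0
  harea : volume I * volume ω = 2

/-- The `L²`-normalized Walsh wave packet of the tile `I × ω`. -/
def wavePacket (I ω : Set ℝ) (x : ℝ) : ℝ :=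
  Real.sqrt (volume I).toReal * walshFT (Set.indicator ω fun _ => (1 : ℝ)) (wXor x (sInf I))

/-- `⟨f, φ_{P_l}⟩`, the pairing of `f` with the wave packet of the lower tile of `P`. -/
def walshCoef (P : Bitile) (f : ℝ → ℝ) : ℝ :=
  ∫ y in Set.Ici (0 : ℝ), f y * wavePacket P.I (lowerHalf P.ω) y

/-- The partial order on bitiles. -/
def Bitile.le (P Q : Bitile) : Prop := P.I ⊆ Q.I ∧ Q.ω ⊆ P.ω

/-- Convexity of a set of bitiles. -/
def ConvexBitiles (S : Set Bitile) : Prop :=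
  ∀ P₁ P₂ P₃ : Bitile, P₁ ∈ S → P₃ ∈ S → Bitile.le P₁ P₂ → Bitile.le P₂ P₃ → P₂ ∈ S

/-- The truncated partial Walsh-sum operator attached to a collection `Ps` of bitiles. -/
def Sk (Ps : Set Bitile) (f : ℝ → ℝ) (k : ℤ) (ξ x : ℝ) : ℝ :=
  ∑ᶠ (P : Bitile) (_ : P ∈ Ps ∧ volume P.I < 2 ^ k),
    walshCoef P f * wavePacket P.I (lowerHalf P.ω) x *
      Set.indicator (upperHalf P.ω) (fun _ => (1 : ℝ)) ξ

/-- The partial Walsh-sum operator `S[f](ξ,x) = (f̂ 1_{[0,ξ)})ˇ(x)`. -/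
def Spartial (f : ℝ → ℝ) (ξ x : ℝ) : ℝ :=
  walshFT (fun η => Set.indicator (Set.Ico 0 ξ) (fun _ => (1 : ℝ)) η * walshFT f η) x

/-- A tree of bitiles with top data `(ξtop, Itop)`. -/
structure WTree where
  carrier : Set Bitile
  ξtop : ℝ
  Itop : Set ℝ

/-- The defining conditions of a tree. -/
def IsTree (T : WTree) : Prop :=
  IsDyadic T.Itop ∧ 0 ≤ T.ξtop ∧ ∀ P ∈ T.carrier, P.I ⊆ T.Itop ∧ T.ξtop ∈ P.ω

/-- `u`-overlapping trees. -/
def UOverlapping (T : WTree) : Prop := ∀ P ∈ T.carrier, T.ξtop ∈ upperHalf P.ω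

/-- `l`-overlapping trees. -/
def LOverlapping (T : WTree) : Prop := ∀ P ∈ T.carrier, T.ξtop ∈ lowerHalf P.ω

/-- `T` is td-maximal among the trees in `Cc` : maximal with respect to inclusion among
trees in `Cc` with the same top data. -/
def TdMaximalAmong (T : WTree) (Cc : Set WTree) : Prop :=
  T ∈ Cc ∧ ∀ T' ∈ Cc, T'.ξtop = T.ξtop → T'.Itop = T.Itop →
    T.carrier ⊆ T'.carrier → T'.carrier ⊆ T.carrier

/-- Order on the lower tiles of two bitiles. -/
def lowerLE (P Q : Bitile) : Prop := P.I ⊆ Q.I ∧ lowerHalf Q.ω ⊆ lowerHalf P.ω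

/-- Strict order on the lower tiles of two bitiles. -/
def lowerLT (P Q : Bitile) : Prop := lowerLE P Q ∧ ¬ lowerLE Q P

/-- `l`-convexity of a set of bitiles. -/
def LConvex (S : Set Bitile) : Prop :=
  ∀ P P' P'' : Bitile, P ∈ S → P'' ∈ S → lowerLT P P' → lowerLT P' P'' → P' ∈ S

/-- A properly-sorted collection of `l`-overlapping trees. -/
def ProperlySorted (Ts : Set WTree) : Prop :=
  (∀ T ∈ Ts, IsTree T ∧ LOverlapping T ∧ LConvex T.carrier) ∧
  (∀ T ∈ Ts, ∀ T' ∈ Ts, T ≠ T' → T.carrier ∩ T'.carrier = ∅) ∧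
  (∀ T ∈ Ts, ∀ P ∈ T.carrier, ∀ T' ∈ Ts, (T'.Itop ∩ P.I).Nonempty → T'.ξtop ∉ upperHalf P.ω)

/-- The multiplier `𝒟_k = Σ_{|ω| = 2^k, ω ∩ Ξ ≠ ∅} a_ω 1_ω`. -/
def Dk (a : Set ℝ → ℝ) (Ξ : Set ℝ) (k : ℤ) (ξ : ℝ) : ℝ :=
  ∑ᶠ (ω : Set ℝ) (_ : IsDyadicLen k ω ∧ (ω ∩ Ξ).Nonempty),
    a ω * Set.indicator ω (fun _ => (1 : ℝ)) ξ

/-- The sequence `k ↦ Σ_{|ω| = 2^k} a_ω 1_ω(ξ)`. -/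
def dyadicSum (a : Set ℝ → ℝ) (ξ : ℝ) (k : ℤ) : ℝ :=
  ∑ᶠ (ω : Set ℝ) (_ : IsDyadicLen k ω), a ω * Set.indicator ω (fun _ => (1 : ℝ)) ξ

/-- A tile `I × ω ⊆ ℝ⁺ × ℝ⁺` : a rectangle of dyadic intervals of area `1`. -/
structure WTile where
  I : Set ℝ
  ω : Set ℝ
  hI : IsDyadic I
  hω : IsDyadic ω
  hIsub : I ⊆ Set.Ici 0
  hωsub : ω ⊆ Set.Ici 0
  harea : volume I * volume ω = 1

/-- The subset of the phase plane occupied by a tile. -/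
def WTile.carrier (p : WTile) : Set (ℝ × ℝ) := p.I ×ˢ p.ω

/-- The phase-plane projection `Π_S` associated to a region `S` which can be written as a
finite disjoint union of tiles (it is independent of the chosen tiling). -/
def phaseProj (S : Set (ℝ × ℝ)) (f : ℝ → ℝ) : ℝ → ℝ :=
  if h : ∃ ps : Set WTile, ps.Finite ∧ ps.PairwiseDisjoint WTile.carrier ∧
      (⋃ p ∈ ps, p.carrier) = S then
    fun x => ∑ᶠ p ∈ h.choose,
      (∫ y in Set.Ici (0 : ℝ), f y * wavePacket p.I p.ω y) * wavePacket p.I p.ω x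
  else 0

/-- The region of the phase plane occupied by a tree. -/
def treeRegion (T : WTree) : Set (ℝ × ℝ) := ⋃ P ∈ T.carrier, P.I ×ˢ P.ω

/-- `size(Ps, f) = sup_{T ⊆ Ps convex tree} |I_T|^{-1/2} ‖Π_T f‖_{L²}`. -/
def size (Ps : Set Bitile) (f : ℝ → ℝ) : ℝ≥0∞ :=
  ⨆ (T : WTree) (_ : IsTree T ∧ ConvexBitiles T.carrier ∧ T.carrier ⊆ Ps),
    (volume T.Itop ^ (1 / 2 : ℝ))⁻¹ * eLpNorm (phaseProj (treeRegion T) f) 2 μplus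


/-!
A Walsh multiplier acts on each bitile by a scalar as soon as its symbol is constant on the
frequency interval of the bitile, so a step symbol with `M` jumps only sees the at most `M` dyadic
frequency intervals of each length that meet a jump. Replacing the bad part of a Calderón–Zygmund
decomposition by its projections to these intervals makes its contribution outside the bad set
vanish up to a function whose `L²` norm is larger by a factor `√M`, which gives a weak `(1, 1)`
bound with constant `O(√M)`. There is no loss on `L²`, so Marcinkiewicz interpolation gives the
constant `O(M^|1/p - 1/2|)` on `L^p` for `1 < p ≤ 2`, and duality gives it for `p > 2`. A family
`Υ` of symbols of `r`-variation at most `1` is a sum of step symbols `U k` with `O(|Υ| 2^k)` jumps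
and size `O(2^(-k/r))`, and the resulting geometric series converges because `|1/p - 1/2| < 1/r`.
-/

/-! ### The discrete Walsh transform -/

/-- The Walsh matrix of order `2 ^ L`: bit `t` of the row index is paired with bit `L - 1 - t` of
the column index, as in the digit `d₋₁(ξ ⊗ x)`. -/
def walshMatrix (L a b : ℕ) : ℝ :=
  ∏ t ∈ Finset.range L, if a.testBit t && b.testBit (L - 1 - t) then -1 else 1

lemma walshMatrix_comm (L a b : ℕ) : walshMatrix L a b = walshMatrix L b a := by
  unfold walshMatrix
  rw [← Finset.prod_range_reflect]
  refine Finset.prod_congr rfl fun t ht => ?_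
  have hreflect : L - 1 - (L - 1 - t) = t := by have := Finset.mem_range.1 ht; omega
  rw [hreflect, Bool.and_comm]

lemma abs_walshMatrix (L a b : ℕ) : |walshMatrix L a b| = 1 := by
  unfold walshMatrix
  rw [Finset.abs_prod]
  exact Finset.prod_eq_one fun t _ => by split_ifs <;> simp only [abs_neg, abs_one]

lemma walshMatrix_mul_add {i k a b : ℕ} (c d : ℕ) (ha : a < 2 ^ i) (hb : b < 2 ^ k) :
    walshMatrix (i + k) (2 ^ i * c + a) (2 ^ k * d + b) =
      walshMatrix i a d * walshMatrix k c b := by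
  unfold walshMatrix
  rw [Finset.prod_range_add]
  congr 1
  · refine Finset.prod_congr rfl fun t ht => ?_
    have hti := Finset.mem_range.1 ht
    rw [Nat.testBit_two_pow_mul_add _ ha, Nat.testBit_two_pow_mul_add _ hb, if_pos hti,
      if_neg (show ¬ i + k - 1 - t < k by omega), show i + k - 1 - t - k = i - 1 - t by omega]
  · refine Finset.prod_congr rfl fun t ht => ?_
    have htk := Finset.mem_range.1 ht
    rw [Nat.testBit_two_pow_mul_add _ ha, Nat.testBit_two_pow_mul_add _ hb,
      if_neg (show ¬ i + t < i by omega), if_pos (show i + k - 1 - (i + t) < k by omega),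
      show i + k - 1 - (i + t) = k - 1 - t by omega, Nat.add_sub_cancel_left]

lemma sum_range_mul_eq_sum_sum {A : Type*} [AddCommMonoid A] (m n : ℕ) (F : ℕ → A) :
    ∑ x ∈ Finset.range (m * n), F x =
      ∑ c ∈ Finset.range n, ∑ a ∈ Finset.range m, F (m * c + a) := by
  induction n with
  | zero => simp only [mul_zero, Finset.range_zero, Finset.sum_empty]
  | succ n ih => rw [Finset.sum_range_succ, ← ih, Nat.mul_succ, Finset.sum_range_add]

lemma sum_walshMatrix_one_mul {b b' : ℕ} (hb : b < 2) (hb' : b' < 2) :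
    ∑ c ∈ Finset.range 2, walshMatrix 1 c b * walshMatrix 1 c b' = if b = b' then 2 else 0 := by
  interval_cases b <;> interval_cases b' <;> norm_num [walshMatrix, Finset.sum_range_succ]

lemma sum_walshMatrix_mul {L b b' : ℕ} (hb : b < 2 ^ L) (hb' : b' < 2 ^ L) :
    ∑ a ∈ Finset.range (2 ^ L), walshMatrix L a b * walshMatrix L a b' =
      if b = b' then 2 ^ L else 0 := by
  induction L generalizing b b' with
  | zero =>
    obtain ⟨rfl, rfl⟩ : b = 0 ∧ b' = 0 := by omega
    simp [walshMatrix]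
  | succ L ih =>
    have hfactor : ∀ c a e : ℕ, a < 2 ^ L →
        walshMatrix (L + 1) (2 ^ L * c + a) e =
          walshMatrix L a (e / 2) * walshMatrix 1 c (e % 2) := fun c a e ha => by
      rw [← walshMatrix_mul_add c (e / 2) ha (show e % 2 < 2 ^ 1 by omega), pow_one,
        Nat.div_add_mod]
    calc ∑ a ∈ Finset.range (2 ^ (L + 1)), walshMatrix (L + 1) a b * walshMatrix (L + 1) a b'
        = ∑ c ∈ Finset.range 2, ∑ a ∈ Finset.range (2 ^ L),
            walshMatrix 1 c (b % 2) * walshMatrix 1 c (b' % 2) *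
              (walshMatrix L a (b / 2) * walshMatrix L a (b' / 2)) := by
          rw [pow_succ, sum_range_mul_eq_sum_sum]
          refine Finset.sum_congr rfl fun c _ => Finset.sum_congr rfl fun a ha => ?_
          rw [hfactor c a b (Finset.mem_range.1 ha), hfactor c a b' (Finset.mem_range.1 ha)]
          ring
      _ = (if b % 2 = b' % 2 then 2 else 0) * if b / 2 = b' / 2 then 2 ^ L else 0 := by
          rw [← Finset.sum_mul_sum, sum_walshMatrix_one_mul (by omega) (by omega),
            ih (by omega) (by omega)]
      _ = if b = b' then 2 ^ (L + 1) else 0 := by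
          have hdigits : b = b' ↔ b % 2 = b' % 2 ∧ b / 2 = b' / 2 := by omega
          rw [ite_zero_mul_ite_zero, if_congr hdigits.symm rfl rfl, pow_succ, mul_comm]

/-- The unnormalised Walsh–Fourier transform on `{0, …, 2 ^ L - 1}`. -/
def discreteWalsh (L : ℕ) (f : ℕ → ℝ) (b : ℕ) : ℝ :=
  ∑ a ∈ Finset.range (2 ^ L), walshMatrix L a b * f a

lemma discreteWalsh_congr {L : ℕ} {f g : ℕ → ℝ} (h : ∀ a < 2 ^ L, f a = g a) :
    discreteWalsh L f = discreteWalsh L g :=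
  funext fun _ => Finset.sum_congr rfl fun a ha => by rw [h a (Finset.mem_range.1 ha)]

lemma discreteWalsh_add (L : ℕ) (f g : ℕ → ℝ) :
    discreteWalsh L (f + g) = discreteWalsh L f + discreteWalsh L g := by
  ext b
  simp only [discreteWalsh, Pi.add_apply, mul_add, Finset.sum_add_distrib]

lemma abs_discreteWalsh_le (L : ℕ) (f : ℕ → ℝ) (b : ℕ) :
    |discreteWalsh L f b| ≤ ∑ a ∈ Finset.range (2 ^ L), |f a| := by
  refine (Finset.abs_sum_le_sum_abs _ _).trans (Finset.sum_le_sum fun a _ => ?_)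
  rw [abs_mul, abs_walshMatrix, one_mul]

lemma sum_discreteWalsh_mul (L : ℕ) (f g : ℕ → ℝ) :
    ∑ b ∈ Finset.range (2 ^ L), discreteWalsh L f b * g b =
      ∑ a ∈ Finset.range (2 ^ L), f a * discreteWalsh L g a := by
  simp only [discreteWalsh, Finset.sum_mul, Finset.mul_sum]
  rw [Finset.sum_comm]
  refine Finset.sum_congr rfl fun a _ => Finset.sum_congr rfl fun b _ => ?_
  rw [walshMatrix_comm L b a]
  ring

lemma discreteWalsh_discreteWalsh {L b : ℕ} (f : ℕ → ℝ) (hb : b < 2 ^ L) :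
    discreteWalsh L (discreteWalsh L f) b = 2 ^ L * f b := by
  have hself : discreteWalsh L (discreteWalsh L f) b =
      ∑ a ∈ Finset.range (2 ^ L), discreteWalsh L f a * walshMatrix L b a :=
    Finset.sum_congr rfl fun a _ => by rw [walshMatrix_comm, mul_comm]
  have horth : ∀ a ∈ Finset.range (2 ^ L),
      f a * discreteWalsh L (walshMatrix L b) a = if b = a then 2 ^ L * f a else 0 := by
    intro a ha
    have hsum : discreteWalsh L (walshMatrix L b) a = if a = b then 2 ^ L else 0 := by
      rw [← sum_walshMatrix_mul (Finset.mem_range.1 ha) hb]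
      exact Finset.sum_congr rfl fun c _ => by rw [walshMatrix_comm L b c]
    rw [hsum, mul_ite, mul_zero, mul_comm, if_congr eq_comm rfl rfl]
  rw [hself, sum_discreteWalsh_mul, Finset.sum_congr rfl horth, Finset.sum_ite_eq,
    if_pos (Finset.mem_range.2 hb)]

lemma sum_discreteWalsh_sq (L : ℕ) (f : ℕ → ℝ) :
    ∑ b ∈ Finset.range (2 ^ L), discreteWalsh L f b ^ 2 =
      2 ^ L * ∑ a ∈ Finset.range (2 ^ L), f a ^ 2 := by
  simp only [sq]
  rw [sum_discreteWalsh_mul, Finset.mul_sum]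
  refine Finset.sum_congr rfl fun a ha => ?_
  rw [discreteWalsh_discreteWalsh f (Finset.mem_range.1 ha)]
  ring

/-- The Walsh multiplier operator on `{0, …, 2 ^ L - 1}` with symbol `μ`. -/
def discreteMultiplier (L : ℕ) (μ f : ℕ → ℝ) (x : ℕ) : ℝ :=
  (2 ^ L)⁻¹ * discreteWalsh L (fun b => μ b * discreteWalsh L f b) x

lemma discreteMultiplier_congr {L : ℕ} (μ : ℕ → ℝ) {f g : ℕ → ℝ} (h : ∀ a < 2 ^ L, f a = g a) :
    discreteMultiplier L μ f = discreteMultiplier L μ g := by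
  unfold discreteMultiplier
  rw [discreteWalsh_congr h]

lemma discreteMultiplier_add (L : ℕ) (μ f g : ℕ → ℝ) :
    discreteMultiplier L μ (f + g) = discreteMultiplier L μ f + discreteMultiplier L μ g := by
  have hadd : (fun b => μ b * discreteWalsh L (f + g) b) =
      (fun b => μ b * discreteWalsh L f b) + fun b => μ b * discreteWalsh L g b := by
    ext b
    rw [discreteWalsh_add, Pi.add_apply, Pi.add_apply, mul_add]
  ext x
  rw [discreteMultiplier, hadd, discreteWalsh_add, Pi.add_apply, mul_add]
  rfl

lemma sum_discreteMultiplier_sq_le {L : ℕ} {μ : ℕ → ℝ} (f : ℕ → ℝ) (hμ : ∀ b, |μ b| ≤ 1) :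
    ∑ x ∈ Finset.range (2 ^ L), discreteMultiplier L μ f x ^ 2 ≤
      ∑ a ∈ Finset.range (2 ^ L), f a ^ 2 := by
  calc ∑ x ∈ Finset.range (2 ^ L), discreteMultiplier L μ f x ^ 2
      = ((2 ^ L : ℝ)⁻¹) ^ 2 *
          (2 ^ L * ∑ b ∈ Finset.range (2 ^ L), μ b ^ 2 * discreteWalsh L f b ^ 2) := by
        simp only [discreteMultiplier, mul_pow]
        rw [← Finset.mul_sum, sum_discreteWalsh_sq]
        simp only [mul_pow]
    _ ≤ ((2 ^ L : ℝ)⁻¹) ^ 2 *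
          (2 ^ L * ∑ b ∈ Finset.range (2 ^ L), 1 * discreteWalsh L f b ^ 2) := by
        gcongr with b
        exact (sq_le_one_iff_abs_le_one _).2 (hμ b)
    _ = ∑ a ∈ Finset.range (2 ^ L), f a ^ 2 := by
        simp only [one_mul]
        rw [sum_discreteWalsh_sq]
        field_simp

lemma sum_mul_discreteWalsh_mul_discreteWalsh (L : ℕ) (μ f g : ℕ → ℝ) :
    ∑ b ∈ Finset.range (2 ^ L), μ b * discreteWalsh L f b * discreteWalsh L g b =
      2 ^ L * ∑ x ∈ Finset.range (2 ^ L), discreteMultiplier L μ f x * g x := by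
  rw [← sum_discreteWalsh_mul, Finset.mul_sum]
  refine Finset.sum_congr rfl fun x _ => ?_
  rw [discreteMultiplier]
  field_simp

/-! ### Dyadic blocks and frequency localisation -/

/-- `f` vanishes off the dyadic block `[2 ^ i * c, 2 ^ i * (c + 1))`. -/
def SupportedOnBlock (i c : ℕ) (f : ℕ → ℝ) : Prop := ∀ a, a / 2 ^ i ≠ c → f a = 0

lemma two_pow_mul_add_div {i a : ℕ} (c : ℕ) (ha : a < 2 ^ i) : (2 ^ i * c + a) / 2 ^ i = c := by
  rw [Nat.mul_add_div (by positivity), Nat.div_eq_of_lt ha, add_zero]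

lemma SupportedOnBlock.sum_eq {i k c : ℕ} {f : ℕ → ℝ} (hf : SupportedOnBlock i c f)
    (hc : c < 2 ^ k) :
    ∑ x ∈ Finset.range (2 ^ (i + k)), f x = ∑ a ∈ Finset.range (2 ^ i), f (2 ^ i * c + a) := by
  rw [pow_add, sum_range_mul_eq_sum_sum, Finset.sum_eq_single_of_mem c (Finset.mem_range.2 hc)]
  intro c' _ hne
  refine Finset.sum_eq_zero fun a ha => hf _ ?_
  rwa [two_pow_mul_add_div c' (Finset.mem_range.1 ha)]

lemma SupportedOnBlock.discreteWalsh_eq {i k c : ℕ} {f : ℕ → ℝ} (hf : SupportedOnBlock i c f)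
    (hc : c < 2 ^ k) (d : ℕ) {b : ℕ} (hb : b < 2 ^ k) :
    discreteWalsh (i + k) f (2 ^ k * d + b) =
      walshMatrix k c b * discreteWalsh i (fun a => f (2 ^ i * c + a)) d := by
  have hsupp : SupportedOnBlock i c fun x => walshMatrix (i + k) x (2 ^ k * d + b) * f x :=
    fun x hx => by simp only [hf x hx, mul_zero]
  rw [discreteWalsh, hsupp.sum_eq hc, discreteWalsh, Finset.mul_sum]
  refine Finset.sum_congr rfl fun a ha => ?_
  rw [walshMatrix_mul_add _ _ (Finset.mem_range.1 ha) hb]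
  ring

/-- The orthogonal projection of `f` onto the span of the wave packets which are localised to the
block of index `c` and length `2 ^ i` and whose frequency lies in `D`. -/
def blockProj (i c : ℕ) (D : Finset ℕ) (f : ℕ → ℝ) (x : ℕ) : ℝ :=
  if x / 2 ^ i = c then
    (2 ^ i)⁻¹ * discreteWalsh i
      ((D : Set ℕ).indicator (discreteWalsh i fun a => f (2 ^ i * c + a))) (x % 2 ^ i)
  else 0

lemma supportedOnBlock_blockProj (i c : ℕ) (D : Finset ℕ) (f : ℕ → ℝ) :
    SupportedOnBlock i c (blockProj i c D f) := fun _ hx => if_neg hx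

lemma blockProj_two_pow_mul_add {i a : ℕ} (c : ℕ) (D : Finset ℕ) (f : ℕ → ℝ) (ha : a < 2 ^ i) :
    blockProj i c D f (2 ^ i * c + a) = (2 ^ i)⁻¹ * discreteWalsh i
      ((D : Set ℕ).indicator (discreteWalsh i fun a => f (2 ^ i * c + a))) a := by
  rw [blockProj, if_pos (two_pow_mul_add_div c ha), Nat.mul_add_mod, Nat.mod_eq_of_lt ha]

lemma discreteWalsh_blockProj {i d : ℕ} (c : ℕ) (D : Finset ℕ) (f : ℕ → ℝ) (hd : d < 2 ^ i) :
    discreteWalsh i (fun a => blockProj i c D f (2 ^ i * c + a)) d =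
      (D : Set ℕ).indicator (discreteWalsh i fun a => f (2 ^ i * c + a)) d := by
  set Φ := (D : Set ℕ).indicator (discreteWalsh i fun a => f (2 ^ i * c + a))
  calc discreteWalsh i (fun a => blockProj i c D f (2 ^ i * c + a)) d
      = (2 ^ i)⁻¹ * discreteWalsh i (discreteWalsh i Φ) d := by
        rw [discreteWalsh_congr fun a ha => blockProj_two_pow_mul_add c D f ha, discreteWalsh,
          discreteWalsh, Finset.mul_sum]
        exact Finset.sum_congr rfl fun a _ => mul_left_comm _ _ _
    _ = Φ d := by
        rw [discreteWalsh_discreteWalsh Φ hd]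
        field_simp

lemma sum_indicator_sq_le_card_mul {ι : Type*} (s D : Finset ι) {F : ι → ℝ} {S : ℝ}
    (hF : ∀ d, |F d| ≤ S) : ∑ d ∈ s, (D : Set ι).indicator F d ^ 2 ≤ D.card * S ^ 2 := by
  have hsq : ∀ d, (D : Set ι).indicator F d ^ 2 = if d ∈ D then F d ^ 2 else 0 := fun d => by
    simp only [Set.indicator_apply, Finset.mem_coe, ite_pow, zero_pow two_ne_zero]
  calc ∑ d ∈ s, (D : Set ι).indicator F d ^ 2
      = ∑ d ∈ s with d ∈ D, F d ^ 2 := by simp only [hsq, Finset.sum_filter]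
    _ ≤ ∑ d ∈ D, F d ^ 2 :=
        Finset.sum_le_sum_of_subset_of_nonneg (fun d hd => (Finset.mem_filter.1 hd).2)
          fun _ _ _ => sq_nonneg _
    _ ≤ ∑ _d ∈ D, S ^ 2 := Finset.sum_le_sum fun d _ => by
        rw [← sq_abs]
        gcongr
        exact hF d
    _ = D.card * S ^ 2 := by rw [Finset.sum_const, nsmul_eq_mul]

lemma sum_blockProj_sq_le {i k c : ℕ} (hc : c < 2 ^ k) (D : Finset ℕ) {f : ℕ → ℝ}
    (hf : SupportedOnBlock i c f) :
    ∑ x ∈ Finset.range (2 ^ (i + k)), blockProj i c D f x ^ 2 ≤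
      D.card / 2 ^ i * (∑ x ∈ Finset.range (2 ^ (i + k)), |f x|) ^ 2 := by
  have hsq : SupportedOnBlock i c fun x => blockProj i c D f x ^ 2 := fun x hx => by
    simp only [supportedOnBlock_blockProj i c D f x hx, zero_pow two_ne_zero]
  have habs : SupportedOnBlock i c fun x => |f x| := fun x hx => by simp only [hf x hx, abs_zero]
  rw [hsq.sum_eq hc, habs.sum_eq hc]
  set Φ := discreteWalsh i fun a => f (2 ^ i * c + a)
  set S := ∑ a ∈ Finset.range (2 ^ i), |f (2 ^ i * c + a)|
  calc ∑ a ∈ Finset.range (2 ^ i), blockProj i c D f (2 ^ i * c + a) ^ 2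
      = ((2 ^ i : ℝ)⁻¹) ^ 2 *
          (2 ^ i * ∑ d ∈ Finset.range (2 ^ i), (D : Set ℕ).indicator Φ d ^ 2) := by
        rw [← sum_discreteWalsh_sq, Finset.mul_sum]
        refine Finset.sum_congr rfl fun a ha => ?_
        rw [blockProj_two_pow_mul_add c D f (Finset.mem_range.1 ha), mul_pow]
    _ ≤ ((2 ^ i : ℝ)⁻¹) ^ 2 * (2 ^ i * (D.card * S ^ 2)) := by
        gcongr
        exact sum_indicator_sq_le_card_mul _ D (abs_discreteWalsh_le i _)
    _ = D.card / 2 ^ i * S ^ 2 := by field_simp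

/-- Where `μ` is constant on a frequency block, the multiplier acts on the matching wave packets
by a scalar, so it does not move them out of their spatial block. -/
lemma discreteMultiplier_eq_blockProj {i k c x : ℕ} (hc : c < 2 ^ k) {D : Finset ℕ}
    {μ f : ℕ → ℝ} (hμ : ∀ d ∉ D, ∀ b < 2 ^ k, μ (2 ^ k * d + b) = μ (2 ^ k * d))
    (hf : SupportedOnBlock i c f) (hx : x < 2 ^ (i + k)) (hxc : x / 2 ^ i ≠ c) :
    discreteMultiplier (i + k) μ f x = discreteMultiplier (i + k) μ (blockProj i c D f) x := by
  set g := blockProj i c D f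
  set Φ := discreteWalsh i fun a => f (2 ^ i * c + a)
  have hxk : x / 2 ^ i < 2 ^ k := Nat.div_lt_of_lt_mul (by rwa [← pow_add])
  have hxi : x % 2 ^ i < 2 ^ i := Nat.mod_lt _ (by positivity)
  have hterm : ∀ d < 2 ^ i, ∀ b < 2 ^ k,
      walshMatrix (i + k) (2 ^ k * d + b) x *
          (μ (2 ^ k * d + b) * discreteWalsh (i + k) f (2 ^ k * d + b)) -
        walshMatrix (i + k) (2 ^ k * d + b) x *
          (μ (2 ^ k * d + b) * discreteWalsh (i + k) g (2 ^ k * d + b)) =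
      μ (2 ^ k * d) * (Φ d - (D : Set ℕ).indicator Φ d) * walshMatrix i (x % 2 ^ i) d *
        (walshMatrix k b c * walshMatrix k b (x / 2 ^ i)) := by
    intro d hd b hb
    have hW : walshMatrix (i + k) (2 ^ k * d + b) x =
        walshMatrix i (x % 2 ^ i) d * walshMatrix k b (x / 2 ^ i) := by
      rw [walshMatrix_comm, walshMatrix_comm k b, ← walshMatrix_mul_add _ d hxi hb,
        Nat.div_add_mod]
    rw [hf.discreteWalsh_eq hc d hb, (supportedOnBlock_blockProj i c D f).discreteWalsh_eq hc d hb,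
      discreteWalsh_blockProj c D f hd, hW, walshMatrix_comm k c]
    by_cases hdD : d ∈ D
    · rw [Set.indicator_of_mem (Finset.mem_coe.2 hdD)]
      ring
    · rw [hμ d hdD b hb]
      ring
  rw [discreteMultiplier, discreteMultiplier, ← sub_eq_zero, ← mul_sub, discreteWalsh,
    discreteWalsh, ← Finset.sum_sub_distrib, show 2 ^ (i + k) = 2 ^ k * 2 ^ i by ring,
    sum_range_mul_eq_sum_sum, Finset.sum_eq_zero, mul_zero]
  intro d hd
  rw [Finset.sum_congr rfl fun b hb => hterm d (Finset.mem_range.1 hd) b (Finset.mem_range.1 hb),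
    ← Finset.mul_sum, sum_walshMatrix_mul hc hxk, if_neg hxc.symm, mul_zero]

/-! ### The weak-type estimate for step symbols -/

/-- `u` is a step function whose breakpoints lie in `Ξ`: it takes the same value at the endpoints
of every closed interval that misses `Ξ`. -/
def HasBreaks {α β : Type*} [LinearOrder α] (u : α → β) (Ξ : Finset α) : Prop :=
  ∀ ⦃x y : α⦄, x ≤ y → (∀ z ∈ Ξ, z ∉ Set.Icc x y) → u x = u y

lemma HasBreaks.eq_of_notMem_image_div {β : Type*} {μ : ℕ → β} {Ξ : Finset ℕ}
    (hμ : HasBreaks μ Ξ) {k d b : ℕ} (hd : d ∉ Ξ.image (· / 2 ^ k)) (hb : b < 2 ^ k) :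
    μ (2 ^ k * d + b) = μ (2 ^ k * d) := by
  refine (hμ (Nat.le_add_right _ _) fun z hz hzmem => hd (Finset.mem_image.2 ⟨z, hz, ?_⟩)).symm
  obtain ⟨a, rfl⟩ := Nat.exists_eq_add_of_le hzmem.1
  exact two_pow_mul_add_div d (by have := hzmem.2; omega)

/-- A Calderón–Zygmund replacement of `f` at height `κ` for an operator `T` on functions on
`{0, …, n - 1}`: the function `h` has the same image under `T` off the exceptional set `E`, and
`h` and `E` satisfy the usual bounds in terms of the `ℓ¹` norm of `f`. -/
structure IsCZReplacement (n : ℕ) (T : (ℕ → ℝ) → ℕ → ℝ) (κ B : ℝ) (f h : ℕ → ℝ)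
    (E : Finset ℕ) : Prop where
  sum_sq_le : ∑ x ∈ Finset.range n, h x ^ 2 ≤ B * κ * ∑ x ∈ Finset.range n, |f x|
  mul_card_le : κ * E.card ≤ ∑ x ∈ Finset.range n, |f x|
  eq_off : ∀ x ∈ Finset.range n, x ∉ E → T f x = T h x

lemma isCZReplacement_self {n : ℕ} (T : (ℕ → ℝ) → ℕ → ℝ) {κ B : ℝ} {f : ℕ → ℝ} (hB : 1 ≤ B)
    (hf : ∀ x ∈ Finset.range n, |f x| ≤ κ) : IsCZReplacement n T κ B f f ∅ where
  sum_sq_le := by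
    rw [Finset.mul_sum]
    refine Finset.sum_le_sum fun x hx => ?_
    have hκ : 0 ≤ κ := (abs_nonneg _).trans (hf x hx)
    calc f x ^ 2 = |f x| * |f x| := by rw [← sq_abs, sq]
      _ ≤ κ * |f x| := by gcongr; exact hf x hx
      _ ≤ B * κ * |f x| := by gcongr; exact le_mul_of_one_le_left hκ hB
  mul_card_le := by
    rw [Finset.card_empty, Nat.cast_zero, mul_zero]
    exact Finset.sum_nonneg fun _ _ => abs_nonneg _
  eq_off _ _ _ := rfl

lemma IsCZReplacement.add {n : ℕ} {T : (ℕ → ℝ) → ℕ → ℝ} {κ B : ℝ} {f₁ f₂ h₁ h₂ : ℕ → ℝ}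
    {E₁ E₂ : Finset ℕ} (hT : ∀ f g, T (f + g) = T f + T g)
    (r₁ : IsCZReplacement n T κ B f₁ h₁ E₁) (r₂ : IsCZReplacement n T κ B f₂ h₂ E₂) (hκ : 0 ≤ κ)
    (hf : ∀ x, f₁ x = 0 ∨ f₂ x = 0) (hh : ∀ x, h₁ x = 0 ∨ h₂ x = 0) :
    IsCZReplacement n T κ B (f₁ + f₂) (h₁ + h₂) (E₁ ∪ E₂) := by
  have habs : ∑ x ∈ Finset.range n, |(f₁ + f₂) x| =
      ∑ x ∈ Finset.range n, |f₁ x| + ∑ x ∈ Finset.range n, |f₂ x| := by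
    rw [← Finset.sum_add_distrib]
    refine Finset.sum_congr rfl fun x _ => ?_
    rcases hf x with h | h <;> simp only [Pi.add_apply, h, zero_add, add_zero, abs_zero]
  have hsq : ∑ x ∈ Finset.range n, (h₁ + h₂) x ^ 2 =
      ∑ x ∈ Finset.range n, h₁ x ^ 2 + ∑ x ∈ Finset.range n, h₂ x ^ 2 := by
    rw [← Finset.sum_add_distrib]
    refine Finset.sum_congr rfl fun x _ => ?_
    rcases hh x with h | h <;>
      simp only [Pi.add_apply, h, zero_add, add_zero, zero_pow two_ne_zero]
  have hcard : ((E₁ ∪ E₂).card : ℝ) ≤ E₁.card + E₂.card :=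
    mod_cast Finset.card_union_le E₁ E₂
  refine ⟨?_, ?_, fun x hx hxE => ?_⟩
  · rw [habs, hsq, mul_add]
    exact add_le_add r₁.sum_sq_le r₂.sum_sq_le
  · calc κ * ((E₁ ∪ E₂).card : ℝ) ≤ κ * E₁.card + κ * E₂.card := by
          rw [← mul_add]
          gcongr
      _ ≤ ∑ x ∈ Finset.range n, |(f₁ + f₂) x| := by
          rw [habs]
          exact add_le_add r₁.mul_card_le r₂.mul_card_le
  · rw [Finset.mem_union, not_or] at hxE
    rw [hT, hT, Pi.add_apply, Pi.add_apply, r₁.eq_off x hx hxE.1, r₂.eq_off x hx hxE.2]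

lemma card_filter_div_eq_le (n i c : ℕ) :
    ((Finset.range n).filter fun a => a / 2 ^ i = c).card ≤ 2 ^ i := by
  have hsub : ((Finset.range n).filter fun a => a / 2 ^ i = c) ⊆
      Finset.Ico (c * 2 ^ i) (c * 2 ^ i + 2 ^ i) := fun a ha => by
    have hac := (Finset.mem_filter.1 ha).2
    rw [Nat.div_eq_iff (by positivity)] at hac
    rw [Finset.mem_Ico]
    have : 0 < 2 ^ i := by positivity
    omega
  simpa only [Nat.card_Ico, Nat.add_sub_cancel_left] using Finset.card_le_card hsub

lemma isCZReplacement_blockProj {i k c : ℕ} {μ f : ℕ → ℝ} {Ξ : Finset ℕ} {κ M : ℝ}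
    (hc : c < 2 ^ k) (hμ : HasBreaks μ Ξ) (hΞ : (Ξ.card : ℝ) ≤ M) (hf : SupportedOnBlock i c f)
    (hlow : κ * 2 ^ i ≤ ∑ x ∈ Finset.range (2 ^ (i + k)), |f x|)
    (hhigh : ∑ x ∈ Finset.range (2 ^ (i + k)), |f x| ≤ 2 * κ * 2 ^ i) (hκ : 0 ≤ κ) :
    IsCZReplacement (2 ^ (i + k)) (discreteMultiplier (i + k) μ) κ (2 * M) f
      (blockProj i c (Ξ.image (· / 2 ^ k)) f)
      ((Finset.range (2 ^ (i + k))).filter fun a => a / 2 ^ i = c) where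
  sum_sq_le := by
    set S := ∑ x ∈ Finset.range (2 ^ (i + k)), |f x|
    have hS : 0 ≤ S := Finset.sum_nonneg fun _ _ => abs_nonneg _
    have hM : 0 ≤ M := (Nat.cast_nonneg _).trans hΞ
    have hcard : ((Ξ.image (· / 2 ^ k)).card : ℝ) ≤ M :=
      (Nat.cast_le.2 Finset.card_image_le).trans hΞ
    calc ∑ x ∈ Finset.range (2 ^ (i + k)), blockProj i c (Ξ.image (· / 2 ^ k)) f x ^ 2
        ≤ M / 2 ^ i * (S * S) := by
          rw [← sq]
          exact (sum_blockProj_sq_le hc _ hf).trans (by gcongr)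
      _ ≤ M / 2 ^ i * (2 * κ * 2 ^ i * S) :=
          mul_le_mul_of_nonneg_left (mul_le_mul_of_nonneg_right hhigh hS) (by positivity)
      _ = 2 * M * κ * S := by field_simp
  mul_card_le := by
    refine le_trans ?_ hlow
    gcongr
    exact_mod_cast card_filter_div_eq_le _ i c
  eq_off x hx hxE := by
    refine discreteMultiplier_eq_blockProj hc
      (fun d hd b hb => hμ.eq_of_notMem_image_div hd hb) hf (Finset.mem_range.1 hx) fun hxc => ?_
    exact hxE (Finset.mem_filter.2 ⟨hx, hxc⟩)

lemma div_two_pow_succ (a i : ℕ) : a / 2 ^ (i + 1) = a / 2 ^ i / 2 := by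
  rw [pow_succ, Nat.div_div_eq_div_mul]

lemma supportedOnBlock_indicator (i c : ℕ) (f : ℕ → ℝ) :
    SupportedOnBlock i c ({a | a / 2 ^ i = c}.indicator f) :=
  fun a ha => Set.indicator_of_notMem (show a ∉ {a | a / 2 ^ i = c} from ha) f

lemma SupportedOnBlock.eq_zero_or_eq_zero {i c c' : ℕ} {f g : ℕ → ℝ} (hf : SupportedOnBlock i c f)
    (hg : SupportedOnBlock i c' g) (hne : c ≠ c') (x : ℕ) : f x = 0 ∨ g x = 0 := by
  by_cases hx : x / 2 ^ i = c
  · exact .inr (hg x (hx ▸ hne))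
  · exact .inl (hf x hx)

lemma SupportedOnBlock.indicator_add_indicator {i c : ℕ} {f : ℕ → ℝ}
    (hf : SupportedOnBlock (i + 1) c f) :
    {a | a / 2 ^ i = 2 * c}.indicator f + {a | a / 2 ^ i = 2 * c + 1}.indicator f = f := by
  ext a
  simp only [Pi.add_apply, Set.indicator_apply, Set.mem_ofPred_eq]
  split_ifs with h₁ h₂ h₂
  · omega
  · exact add_zero _
  · exact zero_add _
  · rw [add_zero, hf a (by rw [div_two_pow_succ]; omega)]

/-- Stopping-time argument: a block is bisected until the mean of `|f|` over it exceeds `κ`, which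
by then it does by a factor of at most `2`. -/
lemma exists_isCZReplacement {L : ℕ} {μ : ℕ → ℝ} {Ξ : Finset ℕ} {κ M : ℝ} (hμ : HasBreaks μ Ξ)
    (hM : 1 ≤ M) (hΞ : (Ξ.card : ℝ) ≤ M) (hκ : 0 ≤ κ) (i : ℕ) :
    ∀ (k c : ℕ) (f : ℕ → ℝ), i + k = L → c < 2 ^ k → SupportedOnBlock i c f →
      ∑ x ∈ Finset.range (2 ^ L), |f x| ≤ κ * 2 ^ i →
      ∃ h E, SupportedOnBlock i c h ∧
        IsCZReplacement (2 ^ L) (discreteMultiplier L μ) κ (2 * M) f h E := by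
  induction i with
  | zero =>
    intro k c f _ _ hf hsum
    refine ⟨f, ∅, hf, isCZReplacement_self _ (by linarith) fun x hx => ?_⟩
    calc |f x| ≤ ∑ x ∈ Finset.range (2 ^ L), |f x| :=
          Finset.single_le_sum (f := fun x => |f x|) (fun _ _ => abs_nonneg _) hx
      _ ≤ κ := by simpa only [pow_zero, mul_one] using hsum
  | succ i ih =>
    intro k c f hL hc hf hsum
    have hchild : ∀ c' < 2 ^ (k + 1), ∃ h E, SupportedOnBlock i c' h ∧
        IsCZReplacement (2 ^ L) (discreteMultiplier L μ) κ (2 * M)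
          ({a | a / 2 ^ i = c'}.indicator f) h E := by
      intro c' hc'
      have hsupp := supportedOnBlock_indicator i c' f
      have hhigh : ∑ x ∈ Finset.range (2 ^ L), |{a | a / 2 ^ i = c'}.indicator f x| ≤
          2 * κ * 2 ^ i := by
        refine (Finset.sum_le_sum fun x _ => ?_).trans (hsum.trans_eq (by ring))
        simpa only [Real.norm_eq_abs] using norm_indicator_le_norm_self f x
      obtain hle | hlt := le_total
        (∑ x ∈ Finset.range (2 ^ L), |{a | a / 2 ^ i = c'}.indicator f x|) (κ * 2 ^ i)
      · exact ih (k + 1) c' _ (by omega) hc' hsupp hle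
      · obtain rfl : i + (k + 1) = L := by omega
        exact ⟨_, _, supportedOnBlock_blockProj _ _ _ _,
          isCZReplacement_blockProj hc' hμ hΞ hsupp hlt hhigh hκ⟩
    obtain ⟨h₁, E₁, hh₁, r₁⟩ := hchild (2 * c) (by rw [pow_succ]; omega)
    obtain ⟨h₂, E₂, hh₂, r₂⟩ := hchild (2 * c + 1) (by rw [pow_succ]; omega)
    refine ⟨h₁ + h₂, E₁ ∪ E₂, fun a ha => ?_, ?_⟩
    · rw [div_two_pow_succ] at ha
      rw [Pi.add_apply, hh₁ a (by omega), hh₂ a (by omega), add_zero]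
    · rw [← hf.indicator_add_indicator]
      have hne : 2 * c ≠ 2 * c + 1 := by omega
      exact r₁.add (discreteMultiplier_add L μ) r₂ hκ
        ((supportedOnBlock_indicator _ _ f).eq_zero_or_eq_zero
          (supportedOnBlock_indicator _ _ f) hne) (hh₁.eq_zero_or_eq_zero hh₂ hne)

lemma card_filter_lt_abs_mul_sq_le {ι : Type*} (s : Finset ι) (F : ι → ℝ) {l : ℝ} (hl : 0 ≤ l) :
    ((s.filter fun x => l < |F x|).card : ℝ) * l ^ 2 ≤ ∑ x ∈ s, F x ^ 2 := by
  calc ((s.filter fun x => l < |F x|).card : ℝ) * l ^ 2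
      = ∑ x ∈ s with l < |F x|, l ^ 2 := by rw [Finset.sum_const, nsmul_eq_mul]
    _ ≤ ∑ x ∈ s with l < |F x|, F x ^ 2 := Finset.sum_le_sum fun x hx => by
        rw [← sq_abs (F x)]
        gcongr
        exact (Finset.mem_filter.1 hx).2.le
    _ ≤ ∑ x ∈ s, F x ^ 2 := Finset.sum_le_sum_of_subset_of_nonneg (Finset.filter_subset _ _)
        fun _ _ _ => sq_nonneg _

/-- With `κ = l / √M` the exceptional set and the Chebyshev estimate are both of size `√M`. -/
lemma IsCZReplacement.card_filter_lt_abs_mul_le {n : ℕ} {T : (ℕ → ℝ) → ℕ → ℝ} {κ M : ℝ}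
    {f h : ℕ → ℝ} {E : Finset ℕ} (r : IsCZReplacement n T κ (2 * M) f h E) (hκ : 0 < κ)
    (hM : 0 < M)
    (hT : ∑ x ∈ Finset.range n, T h x ^ 2 ≤ ∑ x ∈ Finset.range n, h x ^ 2) :
    (((Finset.range n).filter fun x => κ * √M < |T f x|).card : ℝ) * (κ * √M) ≤
      3 * √M * ∑ x ∈ Finset.range n, |f x| := by
  set S := ∑ x ∈ Finset.range n, |f x|
  set l := κ * √M
  have hl : 0 < l := by positivity
  set G := (Finset.range n).filter fun x => l < |T h x|
  have hsub : ((Finset.range n).filter fun x => l < |T f x|) ⊆ E ∪ G := by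
    intro x hx
    rw [Finset.mem_filter] at hx
    by_cases hxE : x ∈ E
    · exact Finset.mem_union_left _ hxE
    · exact Finset.mem_union_right _ (Finset.mem_filter.2 ⟨hx.1, r.eq_off x hx.1 hxE ▸ hx.2⟩)
  have hcard : (((Finset.range n).filter fun x => l < |T f x|).card : ℝ) ≤ E.card + G.card :=
    mod_cast (Finset.card_le_card hsub).trans (Finset.card_union_le _ _)
  have hG : (G.card : ℝ) * l ≤ 2 * √M * S := by
    refine le_of_mul_le_mul_right ?_ hl
    calc (G.card : ℝ) * l * l = G.card * l ^ 2 := by ring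
      _ ≤ 2 * M * κ * S :=
          (card_filter_lt_abs_mul_sq_le _ _ hl.le).trans (hT.trans r.sum_sq_le)
      _ = 2 * (√M * √M) * κ * S := by rw [Real.mul_self_sqrt hM.le]
      _ = 2 * √M * S * l := by ring
  calc (((Finset.range n).filter fun x => l < |T f x|).card : ℝ) * l
      ≤ (E.card + G.card) * l := by gcongr
    _ = κ * E.card * √M + G.card * l := by ring
    _ ≤ S * √M + 2 * √M * S := by gcongr; exact r.mul_card_le
    _ = 3 * √M * S := by ring

/-- The multi-frequency weak-type `(1, 1)` bound: only the square root of the number of breakpoints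
is lost. -/
lemma card_filter_lt_abs_discreteMultiplier_mul_le {L : ℕ} {μ : ℕ → ℝ} {Ξ : Finset ℕ} {M : ℝ}
    (hμ : HasBreaks μ Ξ) (hM : 1 ≤ M) (hΞ : (Ξ.card : ℝ) ≤ M) (hμ1 : ∀ b, |μ b| ≤ 1)
    (f : ℕ → ℝ) {l : ℝ} (hl : 0 < l) :
    (((Finset.range (2 ^ L)).filter fun x => l < |discreteMultiplier L μ f x|).card : ℝ) * l ≤
      3 * √M * ∑ x ∈ Finset.range (2 ^ L), |f x| := by
  obtain ⟨κ, hκ, rfl⟩ : ∃ κ, 0 < κ ∧ κ * √M = l :=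
    ⟨l / √M, by positivity, div_mul_cancel₀ _ (by positivity)⟩
  have hg : ∀ a < 2 ^ L, (Set.Iio (2 ^ L)).indicator f a = f a :=
    fun a ha => Set.indicator_of_mem (Set.mem_Iio.2 ha) f
  have hgsum : ∑ x ∈ Finset.range (2 ^ L), |(Set.Iio (2 ^ L)).indicator f x| =
      ∑ x ∈ Finset.range (2 ^ L), |f x| :=
    Finset.sum_congr rfl fun x hx => by rw [hg x (Finset.mem_range.1 hx)]
  rw [← hgsum, ← discreteMultiplier_congr μ hg]
  obtain hle | hlt := le_total
    (∑ x ∈ Finset.range (2 ^ L), |(Set.Iio (2 ^ L)).indicator f x|) (κ * 2 ^ L)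
  · have hsupp : SupportedOnBlock L 0 ((Set.Iio (2 ^ L)).indicator f) := fun a ha =>
      Set.indicator_of_notMem (fun h : a ∈ Set.Iio (2 ^ L) => ha (Nat.div_eq_of_lt h)) f
    obtain ⟨h, E, -, r⟩ := exists_isCZReplacement hμ hM hΞ hκ.le L 0 0 _ rfl
      (by positivity) hsupp hle
    exact r.card_filter_lt_abs_mul_le hκ (by positivity) (sum_discreteMultiplier_sq_le h hμ1)
  · have hcard : (((Finset.range (2 ^ L)).filter fun x => κ * √M <
        |discreteMultiplier L μ ((Set.Iio (2 ^ L)).indicator f) x|).card : ℝ) ≤ 2 ^ L :=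
      mod_cast (Finset.card_filter_le _ _).trans_eq (Finset.card_range _)
    set S := ∑ x ∈ Finset.range (2 ^ L), |(Set.Iio (2 ^ L)).indicator f x|
    have hS : 0 ≤ S := Finset.sum_nonneg fun _ _ => abs_nonneg _
    calc _ ≤ 2 ^ L * (κ * √M) := by gcongr
      _ = √M * (κ * 2 ^ L) := by ring
      _ ≤ √M * S := by gcongr
      _ ≤ 3 * √M * S := mul_le_mul_of_nonneg_right (by linarith [Real.sqrt_nonneg M]) hS

/-! ### Interpolation -/

lemma integrableOn_indicator_Iio_rpow {s t : ℝ} (hs : -1 < s) (ht : 0 ≤ t) :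
    IntegrableOn ((Set.Iio t).indicator fun l : ℝ => l ^ s) (Set.Ioi 0) := by
  rw [integrableOn_indicator_iff measurableSet_Iio, Set.inter_comm, Set.Ioi_inter_Iio,
    ← intervalIntegrable_iff_integrableOn_Ioo_of_le ht]
  exact intervalIntegral.intervalIntegrable_rpow' hs

lemma integral_indicator_Iio_rpow {s t : ℝ} (hs : -1 < s) (ht : 0 ≤ t) :
    ∫ l in Set.Ioi 0, (Set.Iio t).indicator (fun l : ℝ => l ^ s) l = t ^ (s + 1) / (s + 1) := by
  rw [setIntegral_indicator measurableSet_Iio, Set.Ioi_inter_Iio, ← integral_Ioc_eq_integral_Ioo,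
    ← intervalIntegral.integral_of_le ht, integral_rpow (.inl hs), Real.zero_rpow (by linarith),
    sub_zero]

lemma Ioi_zero_inter_Ici {t : ℝ} (ht : 0 < t) : Set.Ioi 0 ∩ Set.Ici t = Set.Ici t :=
  Set.inter_eq_right.2 fun _ hl => ht.trans_le hl

lemma integrableOn_indicator_Ici_rpow {s t : ℝ} (hs : s < -1) (ht : 0 < t) :
    IntegrableOn ((Set.Ici t).indicator fun l : ℝ => l ^ s) (Set.Ioi 0) := by
  rw [integrableOn_indicator_iff measurableSet_Ici, Set.inter_comm, Ioi_zero_inter_Ici ht,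
    integrableOn_Ici_iff_integrableOn_Ioi]
  exact integrableOn_Ioi_rpow_of_lt hs ht

lemma integral_indicator_Ici_rpow {s t : ℝ} (hs : s < -1) (ht : 0 < t) :
    ∫ l in Set.Ioi 0, (Set.Ici t).indicator (fun l : ℝ => l ^ s) l = -t ^ (s + 1) / (s + 1) := by
  rw [setIntegral_indicator measurableSet_Ici, Ioi_zero_inter_Ici ht, integral_Ici_eq_integral_Ioi,
    integral_Ioi_rpow_of_lt hs ht]

/-- The contribution of a function value of modulus `a` to the Marcinkiewicz bound at level `l`:
values above the height `W * l` enter through the weak `(1, 1)` bound with constant `W`, the others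
through the weak `(2, 2)` bound, both weighted by `p * l ^ (p - 1)`. -/
def marcinkiewiczKernel (p W a l : ℝ) : ℝ :=
  p * W * a * (Set.Iio (a / W)).indicator (fun l : ℝ => l ^ (p - 2)) l +
    p * a ^ 2 * (Set.Ici (a / W)).indicator (fun l : ℝ => l ^ (p - 3)) l

lemma marcinkiewiczKernel_zero (p W l : ℝ) : marcinkiewiczKernel p W 0 l = 0 := by
  rw [marcinkiewiczKernel, mul_zero, zero_mul, zero_pow two_ne_zero, mul_zero, zero_mul, add_zero]

lemma integrableOn_marcinkiewiczKernel {p W a : ℝ} (hp₁ : 1 < p) (hp₂ : p < 2) (hW : 0 < W)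
    (ha : 0 ≤ a) : IntegrableOn (marcinkiewiczKernel p W a) (Set.Ioi 0) := by
  obtain rfl | ha := ha.eq_or_lt
  · exact integrableOn_zero.congr_fun (fun l _ => (marcinkiewiczKernel_zero p W l).symm)
      measurableSet_Ioi
  · exact ((integrableOn_indicator_Iio_rpow (by linarith) (by positivity)).const_mul _).add
      ((integrableOn_indicator_Ici_rpow (by linarith) (by positivity)).const_mul _)

lemma integral_marcinkiewiczKernel {p W a : ℝ} (hp₁ : 1 < p) (hp₂ : p < 2) (hW : 0 < W)
    (ha : 0 ≤ a) : ∫ l in Set.Ioi 0, marcinkiewiczKernel p W a l =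
      (p / (p - 1) + p / (2 - p)) * W ^ (2 - p) * a ^ p := by
  obtain rfl | ha := ha.eq_or_lt
  · simp only [marcinkiewiczKernel_zero, integral_zero, Real.zero_rpow (show p ≠ 0 by linarith),
      mul_zero]
  have hW₁ : W * (W ^ (p - 1))⁻¹ = W ^ (2 - p) := by
    rw [← Real.rpow_neg hW.le, mul_comm, ← Real.rpow_add_one hW.ne']
    ring_nf
  have ha₁ : a * a ^ (p - 1) = a ^ p := by
    rw [mul_comm, ← Real.rpow_add_one ha.ne', sub_add_cancel]
  have ha₂ : a ^ 2 * a ^ (p - 2) = a ^ p := by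
    rw [mul_comm, ← Real.rpow_add_natCast ha.ne', Nat.cast_ofNat, sub_add_cancel]
  have hW₂ : (W ^ (p - 2))⁻¹ = W ^ (2 - p) := by rw [← Real.rpow_neg hW.le, neg_sub]
  have hneg : ∀ u : ℝ, -u / (p - 2) = u / (2 - p) := fun u => by
    rw [← neg_sub 2 p, neg_div_neg_eq]
  simp only [marcinkiewiczKernel]
  rw [integral_add
      ((integrableOn_indicator_Iio_rpow (by linarith) (by positivity)).const_mul _)
      ((integrableOn_indicator_Ici_rpow (by linarith) (by positivity)).const_mul _),
    integral_const_mul, integral_const_mul, integral_indicator_Iio_rpow (by linarith)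
      (by positivity), integral_indicator_Ici_rpow (by linarith) (by positivity),
    show p - 2 + 1 = p - 1 by ring, show p - 3 + 1 = p - 2 by ring, Real.div_rpow ha.le hW.le,
    Real.div_rpow ha.le hW.le, div_eq_mul_inv (a ^ (p - 1)), div_eq_mul_inv (a ^ (p - 2)), hW₂,
    hneg]
  calc _ = p / (p - 1) * (W * (W ^ (p - 1))⁻¹) * (a * a ^ (p - 1)) +
        p / (2 - p) * W ^ (2 - p) * (a ^ 2 * a ^ (p - 2)) := by ring
    _ = (p / (p - 1) + p / (2 - p)) * W ^ (2 - p) * a ^ p := by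
      rw [hW₁, ha₁, ha₂]
      ring

section Marcinkiewicz

variable {ι κ : Type*} {s : Finset ι} {t : Finset κ} {T : (ι → ℝ) → κ → ℝ} {W : ℝ}

lemma card_filter_lt_half_abs_le (hT : ∀ f g y, |T (f + g) y| ≤ |T f y| + |T g y|)
    (f g : ι → ℝ) (l : ℝ) :
    (t.filter fun y => l < |T (f + g) y| / 2).card ≤
      (t.filter fun y => l < |T f y|).card + (t.filter fun y => l < |T g y|).card := by
  refine le_trans (Finset.card_le_card fun y hy => ?_) (Finset.card_union_le _ _)
  rw [Finset.mem_filter] at hy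
  rw [← Finset.filter_or, Finset.mem_filter]
  refine ⟨hy.1, ?_⟩
  by_contra! hle
  linarith [hT f g y, hy.2]

lemma sum_mul_indicator_Iio_rpow (s : Finset ι) (p W : ℝ) (f : ι → ℝ) (l : ℝ) :
    ∑ x ∈ s, p * W * |f x| * (Set.Iio (|f x| / W)).indicator (fun l : ℝ => l ^ (p - 2)) l =
      p * l ^ (p - 2) * (W * ∑ x ∈ s, |{x | l < |f x| / W}.indicator f x|) := by
  rw [Finset.mul_sum, Finset.mul_sum]
  refine Finset.sum_congr rfl fun x _ => ?_
  simp only [Set.indicator_apply, Set.mem_Iio, Set.mem_ofPred_eq]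
  split_ifs
  · ring
  · rw [abs_zero, mul_zero, mul_zero, mul_zero]

lemma sum_mul_indicator_Ici_rpow (s : Finset ι) (p W : ℝ) (f : ι → ℝ) (l : ℝ) :
    ∑ x ∈ s, p * |f x| ^ 2 * (Set.Ici (|f x| / W)).indicator (fun l : ℝ => l ^ (p - 3)) l =
      p * l ^ (p - 3) * ∑ x ∈ s, {x | l < |f x| / W}ᶜ.indicator f x ^ 2 := by
  rw [Finset.mul_sum]
  refine Finset.sum_congr rfl fun x _ => ?_
  simp only [Set.indicator_apply, Set.mem_Ici, Set.mem_compl_iff, Set.mem_ofPred_eq, not_lt]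
  split_ifs
  · rw [sq_abs]
    ring
  · rw [zero_pow two_ne_zero, mul_zero, mul_zero]

lemma sum_indicator_half_abs_le_sum_marcinkiewiczKernel {p : ℝ} (hp : 0 ≤ p)
    (hT : ∀ f g y, |T (f + g) y| ≤ |T f y| + |T g y|)
    (hT₁ : ∀ f l, 0 < l → ((t.filter fun y => l < |T f y|).card : ℝ) * l ≤ W * ∑ x ∈ s, |f x|)
    (hT₂ : ∀ f l, 0 < l → ((t.filter fun y => l < |T f y|).card : ℝ) * l ^ 2 ≤ ∑ x ∈ s, f x ^ 2)
    (f : ι → ℝ) {l : ℝ} (hl : 0 < l) :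
    ∑ y ∈ t, p * (Set.Iio (|T f y| / 2)).indicator (fun l : ℝ => l ^ (p - 1)) l ≤
      ∑ x ∈ s, marcinkiewiczKernel p W |f x| l := by
  set big : Set ι := {x | l < |f x| / W}
  have hcard : ((t.filter fun y => l < |T f y| / 2).card : ℝ) ≤
      (t.filter fun y => l < |T (big.indicator f) y|).card +
        (t.filter fun y => l < |T (bigᶜ.indicator f) y|).card := by
    have h := card_filter_lt_half_abs_le (t := t) hT (big.indicator f) (bigᶜ.indicator f) l
    rw [Set.indicator_self_add_compl] at h
    exact_mod_cast h
  have hpow₁ : l ^ (p - 1) = l ^ (p - 2) * l := by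
    rw [← Real.rpow_add_one hl.ne']
    ring_nf
  have hpow₂ : l ^ (p - 1) = l ^ (p - 3) * l ^ 2 := by
    rw [← Real.rpow_add_natCast hl.ne', Nat.cast_ofNat]
    ring_nf
  have hlhs : ∑ y ∈ t, p * (Set.Iio (|T f y| / 2)).indicator (fun l : ℝ => l ^ (p - 1)) l =
      p * l ^ (p - 1) * (t.filter fun y => l < |T f y| / 2).card := by
    simp only [Set.indicator_apply, Set.mem_Iio, mul_ite, mul_zero]
    rw [← Finset.sum_filter, Finset.sum_const, nsmul_eq_mul, mul_comm]
  set N₁ : ℝ := ((t.filter fun y => l < |T (big.indicator f) y|).card : ℝ)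
  set N₂ : ℝ := ((t.filter fun y => l < |T (bigᶜ.indicator f) y|).card : ℝ)
  calc _ ≤ p * l ^ (p - 1) * (N₁ + N₂) := by
        rw [hlhs]
        gcongr
    _ = p * l ^ (p - 2) * (N₁ * l) + p * l ^ (p - 3) * (N₂ * l ^ 2) := by
        rw [mul_add]
        nth_rw 1 [hpow₁]
        rw [hpow₂]
        ring
    _ ≤ p * l ^ (p - 2) * (W * ∑ x ∈ s, |big.indicator f x|) +
          p * l ^ (p - 3) * ∑ x ∈ s, bigᶜ.indicator f x ^ 2 :=
        add_le_add (mul_le_mul_of_nonneg_left (hT₁ _ l hl) (by positivity))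
          (mul_le_mul_of_nonneg_left (hT₂ _ l hl) (by positivity))
    _ = ∑ x ∈ s, marcinkiewiczKernel p W |f x| l := by
        rw [← sum_mul_indicator_Iio_rpow, ← sum_mul_indicator_Ici_rpow, ← Finset.sum_add_distrib]
        rfl

theorem sum_abs_rpow_le_of_weakType {p : ℝ} (hp₁ : 1 < p) (hp₂ : p < 2) (hW : 0 < W)
    (hT : ∀ f g y, |T (f + g) y| ≤ |T f y| + |T g y|)
    (hT₁ : ∀ f l, 0 < l → ((t.filter fun y => l < |T f y|).card : ℝ) * l ≤ W * ∑ x ∈ s, |f x|)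
    (hT₂ : ∀ f l, 0 < l → ((t.filter fun y => l < |T f y|).card : ℝ) * l ^ 2 ≤ ∑ x ∈ s, f x ^ 2)
    (f : ι → ℝ) :
    ∑ y ∈ t, |T f y| ^ p ≤
      2 ^ p * (p / (p - 1) + p / (2 - p)) * W ^ (2 - p) * ∑ x ∈ s, |f x| ^ p := by
  have hint : ∀ y, IntegrableOn
      (fun l => p * (Set.Iio (|T f y| / 2)).indicator (fun l : ℝ => l ^ (p - 1)) l)
      (Set.Ioi 0) := fun y =>
    (integrableOn_indicator_Iio_rpow (by linarith) (by positivity)).const_mul _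
  have hlayer : ∀ y, (|T f y| / 2) ^ p =
      ∫ l in Set.Ioi 0, p * (Set.Iio (|T f y| / 2)).indicator (fun l : ℝ => l ^ (p - 1)) l := by
    intro y
    rw [integral_const_mul, integral_indicator_Iio_rpow (by linarith) (by positivity),
      sub_add_cancel]
    field_simp
  calc ∑ y ∈ t, |T f y| ^ p = 2 ^ p * ∑ y ∈ t, (|T f y| / 2) ^ p := by
        rw [Finset.mul_sum]
        refine Finset.sum_congr rfl fun y _ => ?_
        rw [← Real.mul_rpow (by norm_num) (by positivity), mul_div_cancel₀ _ two_ne_zero]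
    _ = 2 ^ p * ∫ l in Set.Ioi 0,
          ∑ y ∈ t, p * (Set.Iio (|T f y| / 2)).indicator (fun l : ℝ => l ^ (p - 1)) l := by
        rw [integral_finsetSum _ fun y _ => hint y]
        simp only [hlayer]
    _ ≤ 2 ^ p * ∫ l in Set.Ioi 0, ∑ x ∈ s, marcinkiewiczKernel p W |f x| l := by
        refine mul_le_mul_of_nonneg_left (setIntegral_mono_on
          (integrable_finsetSum _ fun y _ => hint y)
          (integrable_finsetSum _ fun x _ =>
            integrableOn_marcinkiewiczKernel hp₁ hp₂ hW (abs_nonneg (f x)))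
          measurableSet_Ioi fun l hl => ?_) (by positivity)
        exact sum_indicator_half_abs_le_sum_marcinkiewiczKernel (by linarith) hT hT₁ hT₂ f hl
    _ = 2 ^ p * (p / (p - 1) + p / (2 - p)) * W ^ (2 - p) * ∑ x ∈ s, |f x| ^ p := by
        rw [integral_finsetSum _ fun x _ =>
          integrableOn_marcinkiewiczKernel hp₁ hp₂ hW (abs_nonneg (f x))]
        simp only [integral_marcinkiewiczKernel hp₁ hp₂ hW (abs_nonneg _)]
        rw [← Finset.mul_sum]
        ring

end Marcinkiewicz

/-- The `ℓ^p` norm of the restriction of `f` to `{0, …, n - 1}`. -/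
def lpNormRange (n : ℕ) (p : ℝ) (f : ℕ → ℝ) : ℝ :=
  (∑ x ∈ Finset.range n, |f x| ^ p) ^ (1 / p)

lemma lpNormRange_nonneg (n : ℕ) (p : ℝ) (f : ℕ → ℝ) : 0 ≤ lpNormRange n p f := by
  unfold lpNormRange
  positivity

lemma abs_sum_mul_le_lpNormRange_mul {p q : ℝ} (hpq : p.HolderConjugate q) (n : ℕ)
    (f g : ℕ → ℝ) :
    |∑ x ∈ Finset.range n, f x * g x| ≤ lpNormRange n p f * lpNormRange n q g := by
  refine (Finset.abs_sum_le_sum_abs _ _).trans ?_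
  simp only [abs_mul]
  simpa only [abs_abs, lpNormRange] using
    Real.inner_le_Lp_mul_Lq (Finset.range n) (fun x => |f x|) (fun x => |g x|) hpq

lemma rpow_marcinkiewicz_constant {K M p : ℝ} (hK : 0 ≤ K) (hM : 0 ≤ M) (hp : 0 < p) :
    (K * (3 * √M) ^ (2 - p)) ^ (1 / p) = K ^ (1 / p) * 3 ^ (2 / p - 1) * M ^ (1 / p - 1 / 2) := by
  have hexp : (2 - p) * (1 / p) = 2 / p - 1 := by field_simp
  rw [Real.mul_rpow hK (by positivity), ← Real.rpow_mul (by positivity), hexp,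
    Real.mul_rpow (by norm_num) (by positivity), Real.sqrt_eq_rpow, ← Real.rpow_mul hM,
    show 1 / 2 * (2 / p - 1) = 1 / p - 1 / 2 by ring, mul_assoc]

lemma exists_lpNormRange_discreteMultiplier_le {p : ℝ} (hp₁ : 1 < p) (hp₂ : p ≤ 2) :
    ∃ C, 0 < C ∧ ∀ (L : ℕ) (μ : ℕ → ℝ) (Ξ : Finset ℕ) (M : ℝ), HasBreaks μ Ξ → 1 ≤ M →
      (Ξ.card : ℝ) ≤ M → (∀ b, |μ b| ≤ 1) → ∀ f,
        lpNormRange (2 ^ L) p (discreteMultiplier L μ f) ≤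
          C * M ^ (1 / p - 1 / 2) * lpNormRange (2 ^ L) p f := by
  obtain hp₂ | rfl := hp₂.lt_or_eq
  · set K := 2 ^ p * (p / (p - 1) + p / (2 - p))
    have hK : 0 < K := mul_pos (by positivity) (add_pos
      (div_pos (by linarith) (sub_pos.2 hp₁)) (div_pos (by linarith) (sub_pos.2 hp₂)))
    refine ⟨K ^ (1 / p) * 3 ^ (2 / p - 1), by positivity, fun L μ Ξ M hμ hM hΞ hμ1 f => ?_⟩
    have hmarc := sum_abs_rpow_le_of_weakType (s := Finset.range (2 ^ L))
      (t := Finset.range (2 ^ L)) (T := discreteMultiplier L μ) (W := 3 * √M) hp₁ hp₂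
      (by positivity)
      (fun f g x => by rw [discreteMultiplier_add]; exact abs_add_le _ _)
      (fun f l hl => card_filter_lt_abs_discreteMultiplier_mul_le hμ hM hΞ hμ1 f hl)
      (fun f l hl => (card_filter_lt_abs_mul_sq_le _ _ hl.le).trans
        (sum_discreteMultiplier_sq_le f hμ1)) f
    calc lpNormRange (2 ^ L) p (discreteMultiplier L μ f)
        ≤ (K * (3 * √M) ^ (2 - p) * ∑ x ∈ Finset.range (2 ^ L), |f x| ^ p) ^ (1 / p) := by
          unfold lpNormRange
          gcongr
      _ = K ^ (1 / p) * 3 ^ (2 / p - 1) * M ^ (1 / p - 1 / 2) * lpNormRange (2 ^ L) p f := by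
          rw [Real.mul_rpow (by positivity) (by positivity),
            rpow_marcinkiewicz_constant hK.le (by linarith) (by linarith), lpNormRange]
  · refine ⟨1, one_pos, fun L μ Ξ M _ _ _ hμ1 f => ?_⟩
    have hL2 := sum_discreteMultiplier_sq_le (L := L) f hμ1
    simp only [lpNormRange, sub_self, Real.rpow_zero, one_mul, Real.rpow_two, sq_abs]
    gcongr

/-- For `p > 2` the bound follows by duality, the bilinear form being symmetric. -/
lemma exists_abs_sum_mul_discreteWalsh_le_of_abs_le_one {p q : ℝ} (hpq : p.HolderConjugate q) :
    ∃ C, 0 < C ∧ ∀ (L : ℕ) (μ : ℕ → ℝ) (Ξ : Finset ℕ) (M : ℝ), HasBreaks μ Ξ → 1 ≤ M →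
      (Ξ.card : ℝ) ≤ M → (∀ b, |μ b| ≤ 1) → ∀ f g,
        |∑ b ∈ Finset.range (2 ^ L), μ b * discreteWalsh L f b * discreteWalsh L g b| ≤
          C * M ^ |1 / p - 1 / 2| * 2 ^ L *
            (lpNormRange (2 ^ L) p f * lpNormRange (2 ^ L) q g) := by
  wlog hp₂ : p ≤ 2 generalizing p q
  · have hinv : 1 / p + 1 / q = 1 := by simpa only [one_div] using hpq.inv_add_inv_eq_one
    have hp : 1 / p ≤ 1 / 2 := one_div_le_one_div_of_le two_pos (not_le.1 hp₂).le
    obtain ⟨C, hC, h⟩ := this hpq.symm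
      ((one_div_le_one_div two_pos hpq.symm.pos).1 (by linarith))
    refine ⟨C, hC, fun L μ Ξ M hμ hM hΞ hμ1 f g => ?_⟩
    have hexp : |1 / p - 1 / 2| = |1 / q - 1 / 2| := by
      rw [← abs_neg]
      congr 1
      linarith
    simpa only [hexp, mul_right_comm (μ _), mul_comm (lpNormRange _ p f)]
      using h L μ Ξ M hμ hM hΞ hμ1 g f
  obtain ⟨C, hC, h⟩ := exists_lpNormRange_discreteMultiplier_le hpq.lt hp₂
  refine ⟨C, hC, fun L μ Ξ M hμ hM hΞ hμ1 f g => ?_⟩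
  rw [sum_mul_discreteWalsh_mul_discreteWalsh, abs_mul,
    abs_of_pos (by positivity : (0 : ℝ) < 2 ^ L),
    abs_of_nonneg (sub_nonneg.2 (one_div_le_one_div_of_le hpq.pos hp₂))]
  calc (2 : ℝ) ^ L * |∑ x ∈ Finset.range (2 ^ L), discreteMultiplier L μ f x * g x|
      ≤ 2 ^ L * (C * M ^ (1 / p - 1 / 2) * lpNormRange (2 ^ L) p f * lpNormRange (2 ^ L) q g) := by
        refine mul_le_mul_of_nonneg_left ?_ (by positivity)
        exact (abs_sum_mul_le_lpNormRange_mul hpq _ _ _).trans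
          (mul_le_mul_of_nonneg_right (h L μ Ξ M hμ hM hΞ hμ1 f) (lpNormRange_nonneg _ _ _))
    _ = _ := by ring

lemma exists_abs_sum_mul_discreteWalsh_le {p q : ℝ} (hpq : p.HolderConjugate q) :
    ∃ C, 0 < C ∧ ∀ (L : ℕ) (μ : ℕ → ℝ) (Ξ : Finset ℕ) (M A : ℝ), HasBreaks μ Ξ → 1 ≤ M →
      (Ξ.card : ℝ) ≤ M → 0 < A → (∀ b, |μ b| ≤ A) → ∀ f g,
        |∑ b ∈ Finset.range (2 ^ L), μ b * discreteWalsh L f b * discreteWalsh L g b| ≤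
          C * M ^ |1 / p - 1 / 2| * A * 2 ^ L *
            (lpNormRange (2 ^ L) p f * lpNormRange (2 ^ L) q g) := by
  obtain ⟨C, hC, h⟩ := exists_abs_sum_mul_discreteWalsh_le_of_abs_le_one hpq
  refine ⟨C, hC, fun L μ Ξ M A hμ hM hΞ hA hμA f g => ?_⟩
  have hscaled := h L (fun b => A⁻¹ * μ b) Ξ M (fun x y hxy hz => by simp only [hμ hxy hz]) hM hΞ
    (fun b => by
      rw [abs_mul, abs_of_pos (inv_pos.2 hA), inv_mul_le_iff₀ hA, mul_one]
      exact hμA b) f g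
  simp only [mul_assoc A⁻¹] at hscaled
  rw [← Finset.mul_sum, abs_mul, abs_of_pos (inv_pos.2 hA), inv_mul_le_iff₀ hA] at hscaled
  exact hscaled.trans_eq (by ring)

/-! ### Step functions and functions of bounded `r`-variation -/

section HasBreaks

variable {α β : Type*} [LinearOrder α] {u v : α → β} {Ξ Ξ' : Finset α}

lemma HasBreaks.mono (hu : HasBreaks u Ξ) (h : Ξ ⊆ Ξ') : HasBreaks u Ξ' :=
  fun _ _ hxy hz => hu hxy fun z hzΞ => hz z (h hzΞ)

lemma HasBreaks.sub [Sub β] (hu : HasBreaks u Ξ) (hv : HasBreaks v Ξ') :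
    HasBreaks (u - v) (Ξ ∪ Ξ') := fun _ _ hxy hz => by
  rw [Pi.sub_apply, Pi.sub_apply, hu.mono Finset.subset_union_left hxy hz,
    hv.mono Finset.subset_union_right hxy hz]

lemma HasBreaks.sum {κ : Type*} [AddCommMonoid β] {s : Finset κ} {u : κ → α → β}
    {Ξ : κ → Finset α} (hu : ∀ i ∈ s, HasBreaks (u i) (Ξ i)) :
    HasBreaks (fun x => ∑ i ∈ s, u i x) (s.biUnion Ξ) := fun _ _ hxy hz =>
  Finset.sum_congr rfl fun i hi => (hu i hi).mono (Finset.subset_biUnion_of_mem Ξ hi) hxy hz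

lemma HasBreaks.measurable [MeasurableSpace α] [TopologicalSpace α] [OrderClosedTopology α]
    [BorelSpace α] [MeasurableSpace β] (hu : HasBreaks u Ξ) : Measurable u := by
  set φ : α → ℕ := fun x => (Ξ.filter (· < x)).card + (Ξ.filter (· ≤ x)).card
  have hlt : ∀ {x y : α}, x ≤ y → Ξ.filter (· < x) ⊆ Ξ.filter (· < y) := fun hxy =>
    Finset.monotone_filter_right Ξ fun _ _ hz => hz.trans_le hxy
  have hle : ∀ {x y : α}, x ≤ y → Ξ.filter (· ≤ x) ⊆ Ξ.filter (· ≤ y) := fun hxy =>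
    Finset.monotone_filter_right Ξ fun _ _ hz => hz.trans hxy
  have hφ : Monotone φ := fun x y hxy =>
    add_le_add (Finset.card_le_card (hlt hxy)) (Finset.card_le_card (hle hxy))
  have huφ : ∀ {x y : α}, x < y → φ x = φ y → u x = u y := by
    intro x y hxy hφxy
    have hcard₁ := Finset.card_le_card (hlt hxy.le)
    have hcard₂ := Finset.card_le_card (hle hxy.le)
    have hlt_eq := Finset.eq_of_subset_of_card_le (hlt hxy.le) (by grind)
    have hle_eq := Finset.eq_of_subset_of_card_le (hle hxy.le) (by grind)
    refine hu hxy.le fun z hz hzxy => ?_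
    have hzx : z ∈ Ξ.filter (· ≤ x) := hle_eq ▸ Finset.mem_filter.2 ⟨hz, hzxy.2⟩
    have hzy : z ∈ Ξ.filter (· < x) :=
      hlt_eq ▸ Finset.mem_filter.2 ⟨hz, (Finset.mem_filter.1 hzx).2.trans_lt hxy⟩
    exact (Finset.mem_filter.1 hzy).2.not_ge hzxy.1
  have hfactors : u.FactorsThrough φ := fun x y hxy => by
    obtain h | h | h := lt_trichotomy x y
    · exact huφ h hxy
    · rw [h]
    · exact (huφ h hxy.symm).symm
  obtain hα | ⟨⟨x₀⟩⟩ := isEmpty_or_nonempty α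
  · exact measurable_of_empty u
  · rw [← hfactors.extend_comp fun _ => u x₀]
    exact (measurable_of_countable _).comp hφ.measurable

end HasBreaks

section ConditionallyCompleteLinearOrder

variable {α β κ : Type*} [ConditionallyCompleteLinearOrder α]

lemma mem_iff_mem_of_sInf_sSup_notMem_Icc {A : Set α} (hA : A.OrdConnected) {x y : α}
    (hxy : x ≤ y) (hinf : sInf A ∉ Set.Icc x y) (hsup : sSup A ∉ Set.Icc x y) :
    x ∈ A ↔ y ∈ A := by
  constructor
  · intro hx
    by_contra hy
    have hub : ∀ z ∈ A, z ≤ y := fun z hz =>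
      le_of_not_ge fun hyz => hy (hA.out hx hz ⟨hxy, hyz⟩)
    exact hsup ⟨le_csSup ⟨y, hub⟩ hx, csSup_le ⟨x, hx⟩ hub⟩
  · intro hy
    by_contra hx
    have hlb : ∀ z ∈ A, x ≤ z := fun z hz =>
      le_of_not_ge fun hzx => hx (hA.out hz hy ⟨hzx, hxy⟩)
    exact hinf ⟨le_csInf ⟨y, hy⟩ hlb, csInf_le ⟨x, hlb⟩ hy⟩

lemma exists_hasBreaks_of_forall_mem_iff {s : Finset κ} {A : κ → Set α}
    (hA : ∀ i ∈ s, (A i).OrdConnected) {u : α → β}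
    (hu : ∀ x y, (∀ i ∈ s, x ∈ A i ↔ y ∈ A i) → u x = u y) :
    ∃ Ξ, HasBreaks u Ξ ∧ Ξ.card ≤ 2 * s.card := by
  refine ⟨s.biUnion fun i => {sInf (A i), sSup (A i)}, fun x y hxy hz => hu x y fun i hi => ?_, ?_⟩
  · have hendpoint : ∀ z ∈ ({sInf (A i), sSup (A i)} : Finset α), z ∉ Set.Icc x y := fun z hzi =>
      hz z (Finset.mem_biUnion.2 ⟨i, hi, hzi⟩)
    exact mem_iff_mem_of_sInf_sSup_notMem_Icc (hA i hi) hxy (hendpoint _ (by simp))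
      (hendpoint _ (by simp))
  · rw [mul_comm]
    exact Finset.card_biUnion_le_card_mul _ _ _ fun i _ => Finset.card_le_two

lemma exists_hasBreaks_indicator_comp [Zero β] {v : Set α} (hv : v.OrdConnected) {c : α → ℕ}
    (hc : MonotoneOn c v) {n : ℕ} (hcn : ∀ x, c x < n) (F : ℕ → β) :
    ∃ Ξ, HasBreaks (v.indicator (F ∘ c)) Ξ ∧ Ξ.card ≤ 2 * n := by
  rw [← Finset.card_range n]
  refine exists_hasBreaks_of_forall_mem_iff (A := fun z => {x | x ∈ v ∧ c x = z})
    (fun z _ => ⟨?_⟩) fun x y hA => ?_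
  · rintro x ⟨hx, hcx⟩ y ⟨hy, hcy⟩ t ht
    have htv := hv.out hx hy ht
    exact ⟨htv, le_antisymm (hcy ▸ hc htv hy ht.2) (hcx ▸ hc hx htv ht.1)⟩
  · by_cases hx : x ∈ v
    · obtain ⟨hy, hcy⟩ := (hA _ (Finset.mem_range.2 (hcn x))).1 ⟨hx, rfl⟩
      rw [Set.indicator_of_mem hx, Set.indicator_of_mem hy, Function.comp_apply,
        Function.comp_apply, hcy]
    · have hy : y ∉ v := fun hy => hx ((hA _ (Finset.mem_range.2 (hcn y))).2 ⟨hy, rfl⟩).1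
      rw [Set.indicator_of_notMem hx, Set.indicator_of_notMem hy]

end ConditionallyCompleteLinearOrder

section Variation

variable {ι E : Type*} [LinearOrder ι] [NormedAddCommGroup E] {r : ℝ} {D : Set ι} {m : ι → E}

/-- The `r`-th power of the `r`-variation of `m` along the finite chains in `D` that end at `ξ`. As
a function of `ξ` it is monotone on `D`, and its increments control those of `m`. -/
def chainVariation (r : ℝ) (D : Set ι) (m : ι → E) (ξ : ι) : ℝ≥0∞ :=
  ⨆ (N : ℕ) (u : Fin (N + 1) → ι) (_ : StrictMono u) (_ : ∀ i, u i ∈ D) (_ : u (Fin.last N) = ξ),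
    ∑ i : Fin N, (‖m (u i.succ) - m (u i.castSucc)‖₊ : ℝ≥0∞) ^ r

lemma sum_le_chainVariation {N : ℕ} {u : Fin (N + 1) → ι} (hu : StrictMono u)
    (huD : ∀ i, u i ∈ D) :
    ∑ i : Fin N, (‖m (u i.succ) - m (u i.castSucc)‖₊ : ℝ≥0∞) ^ r ≤
      chainVariation r D m (u (Fin.last N)) :=
  le_iSup_of_le N (le_iSup_of_le u (le_iSup_of_le hu (le_iSup_of_le huD
    (le_iSup_of_le rfl le_rfl))))

lemma chainVariation_le_vnorm_rpow (hr : 0 < r) (ξ : ι) :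
    chainVariation r D m ξ ≤ vnorm r D m ^ r := by
  refine iSup_le fun N => iSup_le fun u => iSup_le fun hu => iSup_le fun huD => iSup_le fun _ => ?_
  rw [← ENNReal.rpow_inv_le_iff hr, ← one_div]
  exact le_add_left (le_iSup_of_le N (le_iSup_of_le u (le_iSup_of_le hu
    (le_iSup_of_le huD le_rfl))))

lemma nnnorm_le_vnorm {ξ : ι} (hξ : ξ ∈ D) : (‖m ξ‖₊ : ℝ≥0∞) ≤ vnorm r D m :=
  le_add_right (le_iSup₂_of_le (f := fun ξ (_ : ξ ∈ D) => (‖m ξ‖₊ : ℝ≥0∞)) ξ hξ le_rfl)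

lemma eq_zero_of_vnorm_eq_zero (hsupp : Function.support m ⊆ D) (hm : vnorm r D m = 0) :
    m = 0 := by
  ext ξ
  by_contra hξ
  exact hξ (by simpa [hm] using nnnorm_le_vnorm (r := r) (m := m) (hsupp hξ))

lemma norm_le_of_vnorm_le {V : ℝ} (hV : 0 ≤ V) (hm : vnorm r D m ≤ ENNReal.ofReal V) {ξ : ι}
    (hξ : ξ ∈ D) : ‖m ξ‖ ≤ V := by
  rw [← ENNReal.ofReal_le_ofReal_iff hV, ofReal_norm]
  exact (nnnorm_le_vnorm hξ).trans hm

lemma strictMono_snoc {N : ℕ} {u : Fin (N + 1) → ι} (hu : StrictMono u) {η : ι}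
    (hη : u (Fin.last N) < η) : StrictMono (Fin.snoc (α := fun _ => ι) u η) := by
  rw [Fin.strictMono_iff_lt_succ]
  refine Fin.lastCases ?_ fun i => ?_
  · rwa [Fin.succ_last, Fin.snoc_last, Fin.snoc_castSucc]
  · rw [Fin.succ_castSucc, Fin.snoc_castSucc, Fin.snoc_castSucc]
    exact hu Fin.castSucc_lt_succ

lemma sum_add_le_chainVariation {N : ℕ} {u : Fin (N + 1) → ι} (hu : StrictMono u)
    (huD : ∀ i, u i ∈ D) {η : ι} (hηD : η ∈ D) (hη : u (Fin.last N) < η) :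
    ∑ i : Fin N, (‖m (u i.succ) - m (u i.castSucc)‖₊ : ℝ≥0∞) ^ r +
      (‖m η - m (u (Fin.last N))‖₊ : ℝ≥0∞) ^ r ≤ chainVariation r D m η := by
  have hsnocD : ∀ i, Fin.snoc (α := fun _ => ι) u η i ∈ D := by
    refine Fin.lastCases ?_ fun i => ?_
    · rwa [Fin.snoc_last]
    · rw [Fin.snoc_castSucc]
      exact huD i
  have h := sum_le_chainVariation (r := r) (m := m) (strictMono_snoc hu hη) hsnocD
  simpa only [Fin.sum_univ_castSucc, Fin.succ_castSucc, Fin.snoc_castSucc, Fin.succ_last,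
    Fin.snoc_last] using h

lemma chainVariation_add_le (hr : 0 ≤ r) {ξ η : ι} (hξ : ξ ∈ D) (hη : η ∈ D) (hξη : ξ < η) :
    chainVariation r D m ξ + (‖m η - m ξ‖₊ : ℝ≥0∞) ^ r ≤ chainVariation r D m η := by
  have hstep : (‖m η - m ξ‖₊ : ℝ≥0∞) ^ r ≤ chainVariation r D m η := by
    simpa using sum_add_le_chainVariation (N := 0) (u := fun _ => ξ)
      (Subsingleton.strictMono (α := Fin 1) _) (fun _ => hξ) hη hξη
  have hchain : chainVariation r D m ξ ≤
      chainVariation r D m η - (‖m η - m ξ‖₊ : ℝ≥0∞) ^ r := by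
    refine iSup_le fun N => iSup_le fun u => iSup_le fun hu => iSup_le fun huD =>
      iSup_le fun hlast => ?_
    refine ENNReal.le_sub_of_add_le_right
      (ENNReal.rpow_ne_top_of_nonneg hr ENNReal.coe_ne_top) ?_
    subst hlast
    exact sum_add_le_chainVariation hu huD hη hξη
  exact (add_le_add_left hchain _).trans_eq (tsub_add_cancel_of_le hstep)

lemma chainVariation_ne_top (hr : 0 < r) (hm : vnorm r D m ≠ ⊤) (ξ : ι) :
    chainVariation r D m ξ ≠ ⊤ :=
  ne_top_of_le_ne_top (ENNReal.rpow_ne_top_of_nonneg hr.le hm) (chainVariation_le_vnorm_rpow hr ξ)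

lemma norm_sub_rpow_le_chainVariation (hr : 0 < r) (hm : vnorm r D m ≠ ⊤) {ξ η : ι} (hξ : ξ ∈ D)
    (hη : η ∈ D) (hξη : ξ ≤ η) :
    ‖m η - m ξ‖ ^ r ≤ (chainVariation r D m η).toReal - (chainVariation r D m ξ).toReal := by
  obtain rfl | hlt := hξη.eq_or_lt
  · rw [sub_self, norm_zero, Real.zero_rpow hr.ne', sub_self]
  have h := ENNReal.toReal_mono (chainVariation_ne_top hr hm η)
    (chainVariation_add_le hr.le hξ hη hlt)
  rw [ENNReal.toReal_add (chainVariation_ne_top hr hm ξ)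
    (ENNReal.rpow_ne_top_of_nonneg hr.le ENNReal.coe_ne_top), ← ENNReal.toReal_rpow,
    ENNReal.coe_toReal, coe_nnnorm] at h
  linarith

/-- The witness `w` is the normalised variation of `m` up to a point. -/
lemma exists_monotoneOn_norm_sub_le (hr : 0 < r) {V : ℝ} (hV : 0 < V)
    (hm : vnorm r D m ≤ ENNReal.ofReal V) :
    ∃ w : ι → ℝ, MonotoneOn w D ∧ (∀ ξ, 0 ≤ w ξ) ∧ (∀ ξ, w ξ ≤ 1) ∧
      ∀ ξ ∈ D, ∀ η ∈ D, ξ ≤ η → ‖m η - m ξ‖ ≤ V * (w η - w ξ) ^ (1 / r) := by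
  have hmtop : vnorm r D m ≠ ⊤ := ne_top_of_le_ne_top ENNReal.ofReal_ne_top hm
  have hVr : 0 < V ^ r := Real.rpow_pos_of_pos hV r
  refine ⟨fun ξ => (chainVariation r D m ξ).toReal / V ^ r, fun ξ hξ η hη hξη => ?_,
    fun ξ => by positivity, fun ξ => ?_, fun ξ hξ η hη hξη => ?_⟩
  · have h := norm_sub_rpow_le_chainVariation hr hmtop hξ hη hξη
    have hnn : 0 ≤ ‖m η - m ξ‖ ^ r := by positivity
    exact div_le_div_of_nonneg_right (by linarith) hVr.le
  · rw [div_le_one hVr]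
    refine ENNReal.toReal_le_of_le_ofReal hVr.le ((chainVariation_le_vnorm_rpow hr ξ).trans ?_)
    rw [← ENNReal.ofReal_rpow_of_pos hV]
    exact ENNReal.rpow_le_rpow hm hr.le
  · calc ‖m η - m ξ‖ = V * (‖m η - m ξ‖ ^ r / V ^ r) ^ (1 / r) := by
          rw [← Real.div_rpow (norm_nonneg _) hV.le, one_div,
            Real.rpow_rpow_inv (by positivity) hr.ne', mul_div_cancel₀ _ hV.ne']
      _ ≤ _ := by
          rw [← sub_div]
          gcongr
          exact norm_sub_rpow_le_chainVariation hr hmtop hξ hη hξη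

end Variation

section ConsecutiveDiff

variable {E : Type*} [NormedAddCommGroup E] {s : ℕ → E} {a : E} {V ρ : ℝ}

/-- The sequence whose partial sums are the terms of `s`. -/
def consecutiveDiff (s : ℕ → E) : ℕ → E
  | 0 => s 0
  | k + 1 => s (k + 1) - s k

lemma sum_range_succ_consecutiveDiff (s : ℕ → E) (K : ℕ) :
    ∑ k ∈ Finset.range (K + 1), consecutiveDiff s k = s K := by
  induction K with
  | zero => exact Finset.sum_range_one _
  | succ K ih =>
    rw [Finset.sum_range_succ, ih]
    exact add_sub_cancel _ _

lemma norm_consecutiveDiff_le (hρ : 0 < ρ) (hs : ‖s 0‖ ≤ V) (hsa : ∀ k, ‖a - s k‖ ≤ V * ρ ^ k)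
    (k : ℕ) : ‖consecutiveDiff s k‖ ≤ (1 + ρ⁻¹) * V * ρ ^ k := by
  have hV : 0 ≤ V := (norm_nonneg _).trans hs
  obtain _ | j := k
  · rw [pow_zero, mul_one]
    exact hs.trans (le_mul_of_one_le_left hV (le_add_of_nonneg_right (by positivity)))
  · calc ‖s (j + 1) - s j‖ ≤ ‖a - s j‖ + ‖a - s (j + 1)‖ := by
          rw [← sub_sub_sub_cancel_left _ _ a]
          exact norm_sub_le _ _
      _ ≤ V * ρ ^ j + V * ρ ^ (j + 1) := add_le_add (hsa j) (hsa (j + 1))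
      _ = (1 + ρ⁻¹) * V * ρ ^ (j + 1) := by
          field_simp
          ring

lemma hasSum_consecutiveDiff (hρ : 0 < ρ) (hρ1 : ρ < 1) (hs : ‖s 0‖ ≤ V)
    (hsa : ∀ k, ‖a - s k‖ ≤ V * ρ ^ k) : HasSum (consecutiveDiff s) a := by
  have hsummable : Summable fun k => ‖consecutiveDiff s k‖ :=
    .of_nonneg_of_le (fun k => norm_nonneg _) (norm_consecutiveDiff_le hρ hs hsa)
      ((summable_geometric_of_lt_one hρ.le hρ1).mul_left _)
  rw [hasSum_iff_tendsto_nat_of_summable_norm hsummable, ← tendsto_add_atTop_iff_nat 1]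
  simp only [sum_range_succ_consecutiveDiff]
  refine tendsto_iff_norm_sub_tendsto_zero.2 (squeeze_zero (fun K => norm_nonneg _)
    (fun K => (norm_sub_rev _ _).trans_le (hsa K)) ?_)
  simpa only [mul_zero] using (tendsto_pow_atTop_nhds_zero_of_lt_one hρ.le hρ1).const_mul V

end ConsecutiveDiff

section StepApproximation

lemma sub_le_of_floor_mul_two_pow_eq {a b : ℝ} {k : ℕ} (hb : 0 ≤ b)
    (h : ⌊a * 2 ^ k⌋₊ = ⌊b * 2 ^ k⌋₊) : a - b ≤ (2 ^ k)⁻¹ := by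
  have ha := Nat.lt_floor_add_one (a * 2 ^ k)
  have hb := Nat.floor_le (show 0 ≤ b * 2 ^ k by positivity)
  rw [h] at ha
  rw [← one_div, le_div_iff₀ (by positivity)]
  linarith

lemma inv_two_pow_rpow (k : ℕ) (s : ℝ) : ((2 ^ k)⁻¹ : ℝ) ^ s = (2 ^ (-s)) ^ k := by
  rw [← Real.rpow_natCast, ← Real.rpow_natCast, Real.inv_rpow (by positivity),
    ← Real.rpow_neg (by positivity), ← Real.rpow_mul (by norm_num), ← Real.rpow_mul (by norm_num)]
  congr 1
  ring

variable {ι E : Type*} [NormedAddCommGroup E] {r V : ℝ} {D : Set ι}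

lemma norm_sub_le_of_floor_eq [LinearOrder ι] (hr : 0 < r) (hV : 0 ≤ V) {m : ι → E} {w : ι → ℝ}
    (hw : MonotoneOn w D) (hw₀ : ∀ ξ, 0 ≤ w ξ)
    (hm : ∀ ξ ∈ D, ∀ η ∈ D, ξ ≤ η → ‖m η - m ξ‖ ≤ V * (w η - w ξ) ^ (1 / r)) {k : ℕ} {ξ η : ι}
    (hξ : ξ ∈ D) (hη : η ∈ D) (hk : ⌊w ξ * 2 ^ k⌋₊ = ⌊w η * 2 ^ k⌋₊) :
    ‖m ξ - m η‖ ≤ V * ((2 : ℝ) ^ (-(1 / r))) ^ k := by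
  wlog hle : η ≤ ξ generalizing ξ η
  · rw [norm_sub_rev]
    exact this hη hξ hk.symm (not_le.1 hle).le
  rw [← inv_two_pow_rpow]
  exact (hm η hη ξ hξ hle).trans (mul_le_mul_of_nonneg_left (Real.rpow_le_rpow
    (sub_nonneg.2 (hw hη hξ hle)) (sub_le_of_floor_mul_two_pow_eq (hw₀ η) hk) (by positivity)) hV)

lemma norm_sum_le_of_pairwiseDisjoint_support {Y : Finset (Set ι)}
    (hY : (Y : Set (Set ι)).PairwiseDisjoint id) {F : Set ι → ι → E}
    (hF : ∀ v ∈ Y, Function.support (F v) ⊆ v) {ξ : ι} {B : ℝ} (hB : 0 ≤ B)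
    (hFB : ∀ v ∈ Y, ‖F v ξ‖ ≤ B) : ‖∑ v ∈ Y, F v ξ‖ ≤ B := by
  by_cases hmem : ∃ v ∈ Y, ξ ∈ v
  · obtain ⟨v, hv, hξ⟩ := hmem
    rw [Finset.sum_eq_single_of_mem v hv fun v' hv' hne => Function.notMem_support.1 fun h =>
      Set.disjoint_left.1 (hY hv' hv hne) (hF v' hv' h) hξ]
    exact hFB v hv
  · push Not at hmem
    rwa [Finset.sum_eq_zero fun v hv => Function.notMem_support.1 fun h => hmem v hv (hF v hv h),
      norm_zero]

variable [ConditionallyCompleteLinearOrder ι]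

/-- The approximant takes one value of `m` on each of the at most `2 ^ k + 1` intervals on which
the variation function of `m` stays between two consecutive multiples of `2 ^ (-k)`. -/
lemma exists_hasBreaks_norm_sub_le (hr : 0 < r) (hV : 0 < V) {m : ι → E}
    (hm : vnorm r D m ≤ ENNReal.ofReal V) {v : Set ι} (hvD : v ⊆ D) (hv : v.OrdConnected)
    (hmv : Function.support m ⊆ v) (k : ℕ) :
    ∃ (s : ι → E) (Ξ : Finset ι), HasBreaks s Ξ ∧ Ξ.card ≤ 4 * 2 ^ k ∧
      Function.support s ⊆ v ∧ (∀ ξ, ‖s ξ‖ ≤ V) ∧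
      ∀ ξ, ‖m ξ - s ξ‖ ≤ V * ((2 : ℝ) ^ (-(1 / r))) ^ k := by
  obtain ⟨w, hw, hw₀, hw₁, hwm⟩ := exists_monotoneOn_norm_sub_le hr hV hm
  have : Nonempty ι := ⟨sSup ∅⟩
  set c : ι → ℕ := fun ξ => ⌊w ξ * 2 ^ k⌋₊
  have hc : MonotoneOn c v := fun ξ hξ η hη h =>
    Nat.floor_mono (mul_le_mul_of_nonneg_right (hw (hvD hξ) (hvD hη) h) (by positivity))
  have hck : ∀ ξ, c ξ < 2 ^ k + 1 := fun ξ => Nat.lt_succ_iff.2 (Nat.floor_le_of_le (by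
    push_cast
    exact mul_le_of_le_one_left (by positivity) (hw₁ ξ)))
  set rep : ℕ → ι := Function.invFunOn c v
  have hrep : ∀ ξ ∈ v, rep (c ξ) ∈ v := fun ξ hξ => Function.invFunOn_mem ⟨ξ, hξ, rfl⟩
  have hcrep : ∀ ξ ∈ v, c ξ = c (rep (c ξ)) := fun ξ hξ =>
    (Function.invFunOn_eq (f := c) ⟨ξ, hξ, rfl⟩).symm
  obtain ⟨Ξ, hΞ, hcard⟩ := exists_hasBreaks_indicator_comp hv hc hck (m ∘ rep)
  refine ⟨v.indicator ((m ∘ rep) ∘ c), Ξ, hΞ, by linarith [Nat.one_le_two_pow (n := k)],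
    Set.support_indicator_subset, fun ξ => ?_, fun ξ => ?_⟩
  · by_cases hξ : ξ ∈ v
    · rw [Set.indicator_of_mem hξ]
      exact norm_le_of_vnorm_le hV.le hm (hvD (hrep ξ hξ))
    · rw [Set.indicator_of_notMem hξ, norm_zero]
      exact hV.le
  · by_cases hξ : ξ ∈ v
    · rw [Set.indicator_of_mem hξ]
      exact norm_sub_le_of_floor_eq hr hV.le hw hw₀ hwm (hvD hξ) (hvD (hrep ξ hξ)) (hcrep ξ hξ)
    · rw [Set.indicator_of_notMem hξ, Function.notMem_support.1 fun h => hξ (hmv h), sub_zero,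
        norm_zero]
      positivity

variable {Y : Finset (Set ι)} {m : Set ι → ι → E}

lemma exists_hasBreaks_norm_sum_sub_le (hr : 0 < r) (hV : 0 < V)
    (hY : (Y : Set (Set ι)).PairwiseDisjoint id) (hYD : ∀ v ∈ Y, v ⊆ D)
    (hYord : ∀ v ∈ Y, v.OrdConnected) (hmv : ∀ v ∈ Y, Function.support (m v) ⊆ v)
    (hm : ∀ v ∈ Y, vnorm r D (m v) ≤ ENNReal.ofReal V) (k : ℕ) :
    ∃ (S : ι → E) (Ξ : Finset ι), HasBreaks S Ξ ∧ Ξ.card ≤ 4 * Y.card * 2 ^ k ∧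
      (∀ ξ, ‖S ξ‖ ≤ V) ∧ ∀ ξ, ‖∑ v ∈ Y, m v ξ - S ξ‖ ≤ V * ((2 : ℝ) ^ (-(1 / r))) ^ k := by
  choose! s Ξ hsΞ hΞ hsv hsV hms using fun v (h : v ∈ Y) =>
    exists_hasBreaks_norm_sub_le hr hV (hm v h) (hYD v h) (hYord v h) (hmv v h) k
  refine ⟨fun ξ => ∑ v ∈ Y, s v ξ, Y.biUnion Ξ, HasBreaks.sum hsΞ, ?_, fun ξ =>
    norm_sum_le_of_pairwiseDisjoint_support hY hsv hV.le fun v hv => hsV v hv ξ, fun ξ => ?_⟩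
  · exact (Finset.card_biUnion_le_card_mul _ _ _ hΞ).trans_eq (by ring)
  · rw [← Finset.sum_sub_distrib]
    exact norm_sum_le_of_pairwiseDisjoint_support (F := fun v ξ => m v ξ - s v ξ) hY
      (fun v hv => (Function.support_sub (m v) (s v)).trans
        (Set.union_subset (hmv v hv) (hsv v hv)))
      (by positivity) fun v hv => hms v hv ξ

lemma exists_hasBreaks_hasSum (hr : 0 < r) (hV : 0 < V)
    (hY : (Y : Set (Set ι)).PairwiseDisjoint id) (hYD : ∀ v ∈ Y, v ⊆ D)
    (hYord : ∀ v ∈ Y, v.OrdConnected) (hmv : ∀ v ∈ Y, Function.support (m v) ⊆ v)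
    (hm : ∀ v ∈ Y, vnorm r D (m v) ≤ ENNReal.ofReal V) :
    ∃ (U : ℕ → ι → E) (Ξ : ℕ → Finset ι), (∀ k, HasBreaks (U k) (Ξ k)) ∧
      (∀ k, (Ξ k).card ≤ 8 * Y.card * 2 ^ k) ∧
      (∀ k ξ, ‖U k ξ‖ ≤ (1 + 2 ^ (1 / r)) * V * ((2 : ℝ) ^ (-(1 / r))) ^ k) ∧
      ∀ ξ, HasSum (fun k => U k ξ) (∑ v ∈ Y, m v ξ) := by
  choose S Ξ hSΞ hΞ hSV hmS using
    exists_hasBreaks_norm_sum_sub_le (m := m) hr hV hY hYD hYord hmv hm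
  have hρ : (0 : ℝ) < 2 ^ (-(1 / r)) := by positivity
  have hρ1 : (2 : ℝ) ^ (-(1 / r)) < 1 :=
    Real.rpow_lt_one_of_one_lt_of_neg one_lt_two (by simpa using hr)
  refine ⟨fun k ξ => consecutiveDiff (S · ξ) k, fun k => Ξ k ∪ Ξ (k - 1), ?_, fun k => ?_,
    fun k ξ => ?_, fun ξ => hasSum_consecutiveDiff hρ hρ1 (hSV 0 ξ) fun k => hmS k ξ⟩
  · rintro (_ | j)
    · exact (hSΞ 0).mono Finset.subset_union_left
    · exact (hSΞ (j + 1)).sub (hSΞ j)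
  · have hpow : 2 ^ (k - 1) ≤ 2 ^ k := Nat.pow_le_pow_right two_pos (Nat.sub_le k 1)
    calc (Ξ k ∪ Ξ (k - 1)).card ≤ 4 * Y.card * 2 ^ k + 4 * Y.card * 2 ^ (k - 1) :=
          (Finset.card_union_le _ _).trans (add_le_add (hΞ k) (hΞ (k - 1)))
      _ ≤ 4 * Y.card * 2 ^ k + 4 * Y.card * 2 ^ k := by gcongr
      _ = 8 * Y.card * 2 ^ k := by ring
  · rw [← inv_inv ((2 : ℝ) ^ (1 / r)), ← Real.rpow_neg two_pos.le]
    exact norm_consecutiveDiff_le hρ (hSV 0 ξ) (fun k => hmS k ξ) k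

end StepApproximation

/-! ### The Walsh kernel -/

lemma digit_eq_zero_of_lt {x : ℝ} {p n : ℤ} (hx : 0 ≤ x) (hxp : x < 2 ^ p) (hpn : p ≤ n) :
    digit n x = 0 := by
  have hpos : (0 : ℝ) < 2 ^ n := by positivity
  have hxn : x < 2 ^ n := hxp.trans_le (zpow_le_zpow_right₀ one_le_two hpn)
  have hfloor : ⌊x / 2 ^ n⌋ = 0 :=
    Int.floor_eq_zero_iff.2 ⟨div_nonneg hx hpos.le, (div_lt_one hpos).2 hxn⟩
  rw [digit, hfloor, Int.zero_emod]

lemma digit_eq_zero_or_one (n : ℤ) (x : ℝ) : digit n x = 0 ∨ digit n x = 1 := by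
  unfold digit; omega

lemma wMulDigit_eq_zero_or_one (n : ℤ) (x y : ℝ) : wMulDigit n x y = 0 ∨ wMulDigit n x y = 1 := by
  unfold wMulDigit; omega

lemma digit_natCast_sub (n t : ℕ) {x : ℝ} (hx : 0 ≤ x) :
    digit ((t : ℤ) - n) x = if ⌊x * 2 ^ n⌋₊.testBit t then 1 else 0 := by
  have hdiv : x / 2 ^ ((t : ℤ) - n) = (x * 2 ^ n) / ((2 ^ t : ℕ) : ℝ) := by
    rw [zpow_sub₀ two_ne_zero, zpow_natCast, zpow_natCast, Nat.cast_pow, Nat.cast_ofNat]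
    field_simp
  have hfloor : ⌊x / 2 ^ ((t : ℤ) - n)⌋ = ((⌊x * 2 ^ n⌋₊ / 2 ^ t : ℕ) : ℤ) := by
    rw [hdiv, ← Nat.floor_div_natCast, Int.natCast_floor_eq_floor (by positivity)]
  rw [digit, hfloor, Nat.testBit_eq_decide_div_mod_eq]
  simp only [decide_eq_true_eq]
  split_ifs <;> omega

lemma wMulDigit_eq_sum {n : ℤ} {x y : ℝ} {F : Finset ℤ}
    (hF : ∀ m ∉ F, digit (n - m) x * digit m y = 0) :
    wMulDigit n x y = (∑ m ∈ F, digit (n - m) x * digit m y) % 2 := by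
  rw [wMulDigit, tsum_eq_sum fun m hm => by rw [hF m hm, Int.cast_zero], ← Int.cast_sum,
    Int.floor_intCast]

lemma wMulDigit_eq_zero {a n : ℤ} {x y : ℝ} (hx : 0 ≤ x) (hxa : x < 2 ^ a) (hy : 0 ≤ y)
    (hya : y < 2 ^ a) (hn : 2 * a ≤ n) : wMulDigit n x y = 0 := by
  rw [wMulDigit_eq_sum (F := ∅), Finset.sum_empty, Int.zero_emod]
  intro m _
  rcases le_or_gt a m with ham | ham
  · rw [digit_eq_zero_of_lt hy hya ham, mul_zero]
  · rw [digit_eq_zero_of_lt hx hxa (by omega), zero_mul]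

lemma neg_one_zpow_emod_two (s : ℤ) : (-1 : ℝ) ^ (s % 2) = (-1 : ℝ) ^ s := by
  conv_rhs => rw [← Int.emod_add_mul_ediv s 2, zpow_add₀ (by norm_num), zpow_mul]
  simp

lemma zpow_finset_sum {ι G₀ : Type*} [CommGroupWithZero G₀] {a : G₀} (ha : a ≠ 0) (s : Finset ι)
    (f : ι → ℤ) : a ^ ∑ i ∈ s, f i = ∏ i ∈ s, a ^ f i := by
  induction s using Finset.induction_on with
  | empty => rw [Finset.sum_empty, Finset.prod_empty, zpow_zero]
  | insert i s hi ih => rw [Finset.sum_insert hi, Finset.prod_insert hi, zpow_add₀ ha, ih]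

/-- The kernel `e(ξ ⊗ x)` of the Walsh–Fourier transform on `ℝ⁺ × ℝ⁺`, extended by zero. It is
defined through the digit `d₋₁(ξ ⊗ x)` rather than the number `wMul ξ x`: the two disagree when
the expansion `Σ dₙ(ξ ⊗ x) 2ⁿ` is a non-terminating expansion of a dyadic rational. -/
def walshKernel (ξ x : ℝ) : ℝ := if 0 ≤ ξ ∧ 0 ≤ x then (-1) ^ wMulDigit (-1) ξ x else 0

lemma walshKernel_of_nonneg {ξ x : ℝ} (hξ : 0 ≤ ξ) (hx : 0 ≤ x) :
    walshKernel ξ x = (-1) ^ wMulDigit (-1) ξ x := if_pos ⟨hξ, hx⟩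

lemma abs_walshKernel_of_nonneg {ξ x : ℝ} (hξ : 0 ≤ ξ) (hx : 0 ≤ x) : |walshKernel ξ x| = 1 := by
  rw [walshKernel_of_nonneg hξ hx, abs_neg_one_zpow]

lemma abs_walshKernel_le (ξ x : ℝ) : |walshKernel ξ x| ≤ 1 := by
  unfold walshKernel
  split_ifs
  · rw [abs_neg_one_zpow]
  · rw [abs_zero]; exact zero_le_one

lemma walshKernel_eq_walshMatrix (n j : ℕ) {ξ x : ℝ} (hξ : 0 ≤ ξ) (hξn : ξ < 2 ^ n) (hx : 0 ≤ x)
    (hxj : x < 2 ^ j) :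
    walshKernel ξ x = walshMatrix (n + j) ⌊x * 2 ^ n⌋₊ ⌊ξ * 2 ^ j⌋₊ := by
  rw [walshKernel_of_nonneg hξ hx,
    wMulDigit_eq_sum (F := (Finset.range (n + j)).image fun t : ℕ => (t : ℤ) - n),
    neg_one_zpow_emod_two, zpow_finset_sum (by norm_num), Finset.prod_image, walshMatrix]
  · refine Finset.prod_congr rfl fun t ht => ?_
    have hreflect : (-1 : ℤ) - ((t : ℤ) - n) = ((n + j - 1 - t : ℕ) : ℤ) - j := by
      have := Finset.mem_range.1 ht
      omega
    rw [hreflect, digit_natCast_sub j _ hξ, digit_natCast_sub n _ hx]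
    cases ⌊x * 2 ^ n⌋₊.testBit t <;> cases ⌊ξ * 2 ^ j⌋₊.testBit (n + j - 1 - t) <;> simp
  · intro a _ b _ hab
    simpa using hab
  · intro m hm
    simp only [Finset.mem_image, Finset.mem_range, not_exists, not_and] at hm
    by_cases hmj : (j : ℤ) ≤ m
    · rw [digit_eq_zero_of_lt hx (by exact_mod_cast hxj) hmj, mul_zero]
    · by_cases hmn : m < -n
      · rw [digit_eq_zero_of_lt (p := n) hξ (by exact_mod_cast hξn) (by omega), zero_mul]
      · exact absurd (by omega) (hm (m + n).toNat (by omega))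

lemma exists_lt_two_pow_and_lt_two_pow (x y : ℝ) : ∃ n : ℕ, x < 2 ^ n ∧ y < 2 ^ n := by
  obtain ⟨n, hn⟩ := pow_unbounded_of_one_lt (max x y) one_lt_two
  exact ⟨n, max_lt_iff.1 hn⟩

lemma walshKernel_comm (ξ x : ℝ) : walshKernel ξ x = walshKernel x ξ := by
  by_cases h : 0 ≤ ξ ∧ 0 ≤ x
  · obtain ⟨n, hξn, hxn⟩ := exists_lt_two_pow_and_lt_two_pow ξ x
    rw [walshKernel_eq_walshMatrix n n h.1 hξn h.2 hxn,
      walshKernel_eq_walshMatrix n n h.2 hxn h.1 hξn, walshMatrix_comm]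
  · rw [walshKernel, walshKernel, if_neg h, if_neg fun h' => h h'.symm]

section BinaryExpansion

variable {c : ℤ → ℤ}

lemma hasSum_inv_two_zpow_neg_add_one : HasSum (fun n : ℕ => (2 : ℝ) ^ (-((n : ℤ) + 1))) 1 := by
  have hterm : ∀ n : ℕ, (2 : ℝ) ^ (-((n : ℤ) + 1)) = 1 / 2 / 2 ^ n := fun n => by
    rw [neg_add, zpow_add₀ two_ne_zero, zpow_neg, zpow_natCast, zpow_neg_one]
    field_simp
  simpa only [hterm] using hasSum_geometric_two' (1 : ℝ)

lemma exists_hasSum_fractional_digits (hc : ∀ n, c n = 0 ∨ c n = 1) {k : ℕ}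
    (hk : c (-((k : ℤ) + 1)) = 0) :
    ∃ s ∈ Ico (0 : ℝ) 1,
      HasSum (fun n : ℕ => (c (-((n : ℤ) + 1)) : ℝ) * 2 ^ (-((n : ℤ) + 1))) s := by
  have hdigit : ∀ n, (c n : ℝ) ∈ Icc (0 : ℝ) 1 := fun n => by
    rcases hc n with h | h <;> norm_num [h]
  have hle : ∀ n : ℕ,
      (c (-((n : ℤ) + 1)) : ℝ) * 2 ^ (-((n : ℤ) + 1)) ≤ 2 ^ (-((n : ℤ) + 1)) := fun n =>
    mul_le_of_le_one_left (by positivity) (hdigit _).2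
  have hnonneg : ∀ n : ℕ, 0 ≤ (c (-((n : ℤ) + 1)) : ℝ) * 2 ^ (-((n : ℤ) + 1)) := fun n =>
    mul_nonneg (hdigit _).1 (by positivity)
  have hgeom := hasSum_inv_two_zpow_neg_add_one
  have hsummable := Summable.of_nonneg_of_le hnonneg hle hgeom.summable
  refine ⟨_, ⟨tsum_nonneg hnonneg, ?_⟩, hsummable.hasSum⟩
  rw [← hgeom.tsum_eq]
  refine Summable.tsum_lt_tsum (i := k) hle ?_ hsummable hgeom.summable
  rw [hk, Int.cast_zero, zero_mul]
  positivity

lemma floor_tsum_digits (hc : ∀ n, c n = 0 ∨ c n = 1) {N : ℕ} (hN : ∀ n : ℤ, N ≤ n → c n = 0)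
    {k : ℕ} (hk : c (-((k : ℤ) + 1)) = 0) :
    ⌊∑' n : ℤ, (c n : ℝ) * 2 ^ n⌋ = ∑ n ∈ Finset.range N, c n * 2 ^ n := by
  obtain ⟨s, hs, hfractional⟩ := exists_hasSum_fractional_digits hc hk
  have hinteger : HasSum (fun n : ℕ => (c n : ℝ) * 2 ^ (n : ℤ))
      ((∑ n ∈ Finset.range N, c n * 2 ^ n : ℤ) : ℝ) := by
    push_cast
    refine hasSum_sum_of_ne_finset_zero fun n hn => ?_
    rw [hN n (by simpa using hn), Int.cast_zero, zero_mul]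
  have hsum : HasSum (fun n : ℤ => (c n : ℝ) * 2 ^ n)
      ((∑ n ∈ Finset.range N, c n * 2 ^ n : ℤ) + s) :=
    HasSum.of_nat_of_neg_add_one (f := fun n : ℤ => (c n : ℝ) * 2 ^ n) hinteger hfractional
  rw [hsum.tsum_eq, Int.floor_intCast_add, Int.floor_eq_zero_iff.2 hs, add_zero]

/-- The digit `0` in some position below `p` excludes an expansion of which all digits are
eventually `1`, for which the conclusion fails. -/
lemma digit_tsum_digits (hc : ∀ n, c n = 0 ∨ c n = 1) {N : ℤ} (hN : ∀ n, N ≤ n → c n = 0)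
    {p k : ℤ} (hkp : k < p) (hk : c k = 0) : digit p (∑' n : ℤ, (c n : ℝ) * 2 ^ n) = c p := by
  have hshift : (∑' n : ℤ, (c n : ℝ) * 2 ^ n) / 2 ^ p = ∑' n : ℤ, (c (n + p) : ℝ) * 2 ^ n := by
    rw [← tsum_div_const, ← (Equiv.addRight p).tsum_eq]
    refine tsum_congr fun n => ?_
    rw [Equiv.coe_addRight, zpow_add₀ two_ne_zero, ← mul_assoc,
      mul_div_cancel_right₀ _ (zpow_ne_zero p two_ne_zero)]
  rw [digit, hshift, floor_tsum_digits (c := fun n => c (n + p)) (fun n => hc _)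
    (N := (N - p).toNat + 1) (fun n hn => hN _ (by omega)) (k := (p - k - 1).toNat)
    (by rw [← hk]; congr 1; omega), Finset.sum_range_succ']
  have hdvd : (2 : ℤ) ∣
      ∑ n ∈ Finset.range (N - p).toNat, c (((n + 1 : ℕ) : ℤ) + p) * 2 ^ (n + 1) :=
    Finset.dvd_sum fun n _ => Dvd.dvd.mul_left (dvd_pow_self 2 n.succ_ne_zero) _
  rw [Nat.cast_zero, zero_add, pow_zero, mul_one]
  have := hc p
  omega

end BinaryExpansion

lemma walshe_wMul {ξ x : ℝ} (hξ : 0 ≤ ξ) (hx : 0 ≤ x) {k : ℤ} (hk : k < -1)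
    (hdigit : wMulDigit k ξ x ≠ 1) : walshe (wMul ξ x) = walshKernel ξ x := by
  obtain ⟨N, hξN, hxN⟩ := exists_lt_two_pow_and_lt_two_pow ξ x
  rw [walshKernel_of_nonneg hξ hx, walshe, wMul,
    digit_tsum_digits (fun n => wMulDigit_eq_zero_or_one n ξ x) (N := 2 * N) (fun n hn => ?_) hk
      ((wMulDigit_eq_zero_or_one k ξ x).resolve_right hdigit)]
  exact wMulDigit_eq_zero hξ (by exact_mod_cast hξN) hx (by exact_mod_cast hxN) hn

lemma floor_div_two_zpow (x : ℝ) (p : ℤ) :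
    ⌊x / 2 ^ p⌋ = 2 * ⌊x / 2 ^ (p + 1)⌋ + digit p x := by
  have hhalf : x / 2 ^ (p + 1) = x / 2 ^ p / ((2 : ℕ) : ℝ) := by
    rw [zpow_add_one₀ two_ne_zero, div_mul_eq_div_div, Nat.cast_ofNat]
  rw [digit, hhalf, Int.floor_div_natCast, Nat.cast_ofNat]
  omega

lemma digit_eq_of_floor_div_eq {x y : ℝ} {p m : ℤ} (h : ⌊x / 2 ^ p⌋ = ⌊y / 2 ^ p⌋)
    (hpm : p ≤ m) : digit m x = digit m y := by
  suffices hfloor : ⌊x / 2 ^ m⌋ = ⌊y / 2 ^ m⌋ by rw [digit, digit, hfloor]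
  induction m, hpm using Int.leInduction with
  | base => exact h
  | succ m _ ih =>
    have hx := floor_div_two_zpow x m
    have hy := floor_div_two_zpow y m
    have hdx := digit_eq_zero_or_one m x
    have hdy := digit_eq_zero_or_one m y
    omega

section LeadingDigit

variable {ξ x y : ℝ} {K : ℤ}

lemma digit_eq_one_of_mem_Ico (hξ : ξ ∈ Ico ((2 : ℝ) ^ K) (2 ^ (K + 1))) : digit K ξ = 1 := by
  have hpos : (0 : ℝ) < 2 ^ K := by positivity
  have hfloor : ⌊ξ / 2 ^ K⌋ = 1 := by
    rw [Int.floor_eq_iff, Int.cast_one, le_div_iff₀ hpos, one_mul, div_lt_iff₀ hpos]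
    refine ⟨hξ.1, hξ.2.trans_eq ?_⟩
    rw [zpow_add_one₀ two_ne_zero]
    ring
  rw [digit, hfloor]
  rfl

lemma wMulDigit_add_leading (hξ : ξ ∈ Ico ((2 : ℝ) ^ K) (2 ^ (K + 1))) (p : ℤ) {N : ℕ}
    (hx : 0 ≤ x) (hxN : x < 2 ^ N) :
    wMulDigit (p + K) ξ x =
      (digit p x + ∑ m ∈ Finset.Ioo p N, digit (p + K - m) ξ * digit m x) % 2 := by
  rw [wMulDigit_eq_sum (F := insert p (Finset.Ioo p N)), Finset.sum_insert Finset.left_notMem_Ioo,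
    add_sub_cancel_left, digit_eq_one_of_mem_Ico hξ, one_mul]
  intro m hm
  simp only [Finset.mem_insert, Finset.mem_Ioo, not_or, not_and, not_lt] at hm
  by_cases hmN : (N : ℤ) ≤ m
  · rw [digit_eq_zero_of_lt (p := N) hx (by exact_mod_cast hxN) hmN, mul_zero]
  · have hξ0 : 0 ≤ ξ := le_trans (by positivity) hξ.1
    rw [digit_eq_zero_of_lt hξ0 hξ.2 (by omega), zero_mul]

lemma floor_div_eq_of_wMulDigit_eq (hξ : ξ ∈ Ico ((2 : ℝ) ^ K) (2 ^ (K + 1))) (hx : 0 ≤ x)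
    (hy : 0 ≤ y) {p : ℤ} (hxy : ⌊x / 2 ^ (p + 1)⌋ = ⌊y / 2 ^ (p + 1)⌋)
    (hdigit : wMulDigit (p + K) ξ x = wMulDigit (p + K) ξ y) : ⌊x / 2 ^ p⌋ = ⌊y / 2 ^ p⌋ := by
  obtain ⟨N, hxN, hyN⟩ := exists_lt_two_pow_and_lt_two_pow x y
  have hhigher : ∑ m ∈ Finset.Ioo p N, digit (p + K - m) ξ * digit m x =
      ∑ m ∈ Finset.Ioo p N, digit (p + K - m) ξ * digit m y :=
    Finset.sum_congr rfl fun m hm => by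
      rw [digit_eq_of_floor_div_eq hxy (Finset.mem_Ioo.1 hm).1]
  rw [wMulDigit_add_leading hξ p hx hxN, wMulDigit_add_leading hξ p hy hyN, hhigher] at hdigit
  have hdx := digit_eq_zero_or_one p x
  have hdy := digit_eq_zero_or_one p y
  rw [floor_div_two_zpow x, floor_div_two_zpow y]
  omega

/-- The digits of `x` are recovered from those of `ξ ⊗ x` successively, dividing by the leading
digit of `ξ`. -/
lemma eq_of_wMulDigit_eq (hξ : ξ ∈ Ico ((2 : ℝ) ^ K) (2 ^ (K + 1))) (hx : 0 ≤ x) (hy : 0 ≤ y)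
    {s : ℤ} (hxy : ⌊x / 2 ^ s⌋ = ⌊y / 2 ^ s⌋)
    (hdigit : ∀ n < s + K, wMulDigit n ξ x = wMulDigit n ξ y) : x = y := by
  have hfloor : ∀ d : ℕ, ⌊x / 2 ^ (s - d)⌋ = ⌊y / 2 ^ (s - d)⌋ := by
    intro d
    induction d with
    | zero => simpa using hxy
    | succ d ih =>
      refine floor_div_eq_of_wMulDigit_eq hξ hx hy ?_ (hdigit _ (by omega))
      rwa [show s - ((d + 1 : ℕ) : ℤ) + 1 = s - d by push_cast; ring]
  by_contra hne
  obtain ⟨d, hd⟩ := pow_unbounded_of_one_lt (2 ^ s / |x - y|) one_lt_two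
  have habs : 0 < |x - y| := abs_pos.2 (sub_ne_zero.2 hne)
  have hpos : (0 : ℝ) < 2 ^ (s - (d : ℤ)) := by positivity
  have hclose := Int.abs_sub_lt_one_of_floor_eq_floor (hfloor d)
  rw [← sub_div, abs_div, abs_of_pos hpos, div_lt_one hpos, zpow_sub₀ two_ne_zero, zpow_natCast,
    lt_div_iff₀ (by positivity)] at hclose
  rw [div_lt_iff₀ habs] at hd
  linarith

end LeadingDigit

lemma countable_setOf_wMulDigit_eq_one {ξ : ℝ} (hξ : 0 < ξ) :
    {x : ℝ | 0 ≤ x ∧ ∀ n : ℤ, n < -1 → wMulDigit n ξ x = 1}.Countable := by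
  obtain ⟨K, hK⟩ := exists_mem_Ico_zpow hξ (one_lt_two (α := ℝ))
  refine MapsTo.countable_of_injOn (f := fun x => ⌊x / 2 ^ (-1 - K)⌋) (mapsTo_univ _ _) ?_
    countable_univ
  rintro x ⟨hx, hxdigit⟩ y ⟨hy, hydigit⟩ hxy
  refine eq_of_wMulDigit_eq hK hx hy hxy fun n hn => ?_
  rw [hxdigit n (by omega), hydigit n (by omega)]

/-! ### The Walsh transform -/

lemma measurable_uncurry_walshKernel : Measurable (Function.uncurry walshKernel) := by
  let K : ℕ → ℝ × ℝ → ℝ := fun n z =>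
    if 0 ≤ z.1 ∧ 0 ≤ z.2 then walshMatrix (n + n) ⌊z.2 * 2 ^ n⌋₊ ⌊z.1 * 2 ^ n⌋₊ else 0
  have hK (n : ℕ) : Measurable (K n) := by
    have hfloor : Measurable fun z : ℝ × ℝ => (⌊z.2 * 2 ^ n⌋₊, ⌊z.1 * 2 ^ n⌋₊) := by fun_prop
    have hquadrant : MeasurableSet {z : ℝ × ℝ | 0 ≤ z.1 ∧ 0 ≤ z.2} :=
      (measurableSet_le measurable_const measurable_fst).inter
        (measurableSet_le measurable_const measurable_snd)
    exact Measurable.ite hquadrant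
      ((Measurable.of_discrete (f := Function.uncurry (walshMatrix (n + n)))).comp hfloor)
      measurable_const
  refine measurable_of_tendsto_metrizable hK (tendsto_pi_nhds.2 ?_)
  rintro ⟨ξ, x⟩
  obtain ⟨n, hξn, hxn⟩ := exists_lt_two_pow_and_lt_two_pow ξ x
  refine tendsto_const_nhds.congr' ?_
  filter_upwards [eventually_ge_atTop n] with k hk
  have hnk : (2 : ℝ) ^ n ≤ 2 ^ k := pow_le_pow_right₀ one_le_two hk
  by_cases h : 0 ≤ ξ ∧ 0 ≤ x
  · simp only [K, if_pos h, Function.uncurry]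
    exact walshKernel_eq_walshMatrix k k h.1 (hξn.trans_le hnk) h.2 (hxn.trans_le hnk)
  · simp only [K, if_neg h, Function.uncurry, walshKernel]

lemma measurable_walshKernel (ξ : ℝ) : Measurable (walshKernel ξ) :=
  measurable_uncurry_walshKernel.comp measurable_prodMk_left

/-- The Walsh–Fourier transform, with the kernel `e(ξ ⊗ x)` replaced by the measurable symmetric
kernel `walshKernel`, which agrees with it for almost every `x`. -/
def walshTransform (f : ℝ → ℝ) (ξ : ℝ) : ℝ := ∫ x, walshKernel ξ x * f x ∂μplus

lemma ae_μplus_pos : ∀ᵐ ξ ∂μplus, 0 < ξ := by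
  rw [μplus]
  filter_upwards [(countable_singleton (0 : ℝ)).ae_notMem _, ae_restrict_mem measurableSet_Ici]
    with ξ hξ hξ0
  exact lt_of_le_of_ne hξ0 fun h => hξ h.symm

lemma walshFT_eq_walshTransform (f : ℝ → ℝ) {ξ : ℝ} (hξ : 0 < ξ) :
    walshFT f ξ = walshTransform f ξ := by
  refine integral_congr_ae ?_
  filter_upwards [(countable_setOf_wMulDigit_eq_one hξ).ae_notMem _,
    ae_restrict_mem measurableSet_Ici] with x hx hx0
  obtain ⟨k, hk, hdigit⟩ : ∃ k < -1, wMulDigit k ξ x ≠ 1 := by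
    by_contra! h
    exact hx ⟨hx0, h⟩
  rw [walshe_wMul hξ.le hx0 hk hdigit]

lemma walshFT_ae_eq (f : ℝ → ℝ) : walshFT f =ᵐ[μplus] walshTransform f := by
  filter_upwards [ae_μplus_pos] with ξ hξ using walshFT_eq_walshTransform f hξ

instance : SigmaFinite μplus := by unfold μplus; infer_instance

section

variable {f g : ℝ → ℝ}

lemma integrable_walshKernel_mul (hf : Integrable f μplus) (ξ : ℝ) :
    Integrable (fun x => walshKernel ξ x * f x) μplus :=
  hf.bdd_mul (measurable_walshKernel ξ).aestronglyMeasurable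
    (Eventually.of_forall (abs_walshKernel_le ξ))

lemma abs_walshTransform_le (hf : Integrable f μplus) (ξ : ℝ) :
    |walshTransform f ξ| ≤ ∫ x, |f x| ∂μplus := by
  refine abs_integral_le_integral_abs.trans
    (integral_mono (integrable_walshKernel_mul hf ξ).abs hf.abs fun x => ?_)
  simp only [abs_mul]
  exact mul_le_of_le_one_left (abs_nonneg _) (abs_walshKernel_le ξ x)

lemma walshTransform_of_not_integrable (hf : ¬ Integrable f μplus) {ξ : ℝ} (hξ : 0 ≤ ξ) :
    walshTransform f ξ = 0 := by
  refine integral_undef fun h => hf ?_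
  refine (integrable_walshKernel_mul h ξ).congr ?_
  filter_upwards [ae_μplus_pos] with x hx
  rw [← mul_assoc, ← abs_mul_abs_self, abs_walshKernel_of_nonneg hξ hx.le, one_mul, one_mul]

lemma aestronglyMeasurable_walshTransform (hf : Integrable f μplus) :
    AEStronglyMeasurable (walshTransform f) μplus :=
  (measurable_uncurry_walshKernel.aestronglyMeasurable.mul hf.1.comp_snd).integral_prod_right'

lemma integral_walshTransform_mul (hf : Integrable f μplus) (hg : Integrable g μplus) :
    ∫ ξ, walshTransform f ξ * g ξ ∂μplus = ∫ x, f x * walshTransform g x ∂μplus := by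
  have hfg : Integrable (fun z : ℝ × ℝ => walshKernel z.1 z.2 * (g z.1 * f z.2))
      (μplus.prod μplus) :=
    (hg.mul_prod hf).bdd_mul measurable_uncurry_walshKernel.aestronglyMeasurable
      (Eventually.of_forall fun z => abs_walshKernel_le z.1 z.2)
  calc ∫ ξ, walshTransform f ξ * g ξ ∂μplus
      = ∫ ξ, ∫ x, walshKernel ξ x * (g ξ * f x) ∂μplus ∂μplus := by
        simp only [walshTransform, ← integral_mul_const]
        simp only [mul_comm, mul_left_comm]
    _ = ∫ x, ∫ ξ, walshKernel ξ x * (g ξ * f x) ∂μplus ∂μplus := integral_integral_swap hfg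
    _ = ∫ x, f x * walshTransform g x ∂μplus := by
        simp only [walshTransform, ← integral_const_mul]
        simp only [walshKernel_comm, mul_comm, mul_left_comm]

lemma integrable_mul_walshTransform (hf : Integrable f μplus) (hg : Integrable g μplus) :
    Integrable (fun ξ => f ξ * walshTransform g ξ) μplus :=
  hf.mul_bdd (aestronglyMeasurable_walshTransform hg)
    (Eventually.of_forall (abs_walshTransform_le hg))

end

/-! ### Discretisation of the Walsh transform -/

lemma μplus_Ico_ne_top (a b : ℝ) : μplus (Ico a b) ≠ ∞ :=
  ((Measure.restrict_apply_le _ _).trans_lt measure_Ico_lt_top).ne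

/-- The `a`-th dyadic interval of length `2⁻ˢ` in `ℝ⁺`. -/
def dyadicCell (s a : ℕ) : Set ℝ := Ico ((a : ℝ) / 2 ^ s) (((a : ℝ) + 1) / 2 ^ s)

lemma measurableSet_dyadicCell (s a : ℕ) : MeasurableSet (dyadicCell s a) := measurableSet_Ico

lemma dyadicCell_subset_Ici (s a : ℕ) : dyadicCell s a ⊆ Ici 0 :=
  fun _ hx => le_trans (by positivity) hx.1

lemma μplus_dyadicCell (s a : ℕ) : μplus (dyadicCell s a) = ENNReal.ofReal (1 / 2 ^ s) := by
  rw [μplus, Measure.restrict_apply (measurableSet_dyadicCell s a),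
    inter_eq_left.2 (dyadicCell_subset_Ici s a), dyadicCell, Real.volume_Ico]
  ring_nf

lemma μplus_real_dyadicCell (s a : ℕ) : μplus.real (dyadicCell s a) = 1 / 2 ^ s := by
  rw [Measure.real, μplus_dyadicCell, ENNReal.toReal_ofReal (by positivity)]

lemma μplus_dyadicCell_ne_zero (s a : ℕ) : μplus (dyadicCell s a) ≠ 0 := by
  rw [μplus_dyadicCell]
  exact (ENNReal.ofReal_pos.2 (by positivity)).ne'

lemma μplus_dyadicCell_ne_top (s a : ℕ) : μplus (dyadicCell s a) ≠ ∞ := μplus_Ico_ne_top _ _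

lemma floor_eq_of_mem_dyadicCell {s a : ℕ} {x : ℝ} (hx : x ∈ dyadicCell s a) :
    ⌊x * 2 ^ s⌋₊ = a := by
  have hx0 : 0 ≤ x := dyadicCell_subset_Ici s a hx
  rw [dyadicCell, mem_Ico, div_le_iff₀ (by positivity), lt_div_iff₀ (by positivity)] at hx
  exact (Nat.floor_eq_iff (by positivity)).2 hx

lemma dyadicCell_subset_Ico {s a N : ℕ} (ha : a < N) :
    dyadicCell s a ⊆ Ico 0 ((N : ℝ) / 2 ^ s) := by
  refine fun x hx => ⟨dyadicCell_subset_Ici s a hx, hx.2.trans_le ?_⟩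
  gcongr
  exact_mod_cast ha

lemma setIntegral_Ico_eq_sum_dyadicCell {E : Type*} [NormedAddCommGroup E] [NormedSpace ℝ E]
    {μ : Measure ℝ} {F : ℝ → E} (s : ℕ) {N : ℕ} (hF : IntegrableOn F (Ico 0 (N / 2 ^ s)) μ) :
    ∫ x in Ico 0 ((N : ℝ) / 2 ^ s), F x ∂μ =
      ∑ a ∈ Finset.range N, ∫ x in dyadicCell s a, F x ∂μ := by
  induction N with
  | zero => simp
  | succ N ih =>
    have hunion : Ico 0 (((N + 1 : ℕ) : ℝ) / 2 ^ s) = Ico 0 ((N : ℝ) / 2 ^ s) ∪ dyadicCell s N := by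
      rw [dyadicCell, Ico_union_Ico_eq_Ico (by positivity) (by gcongr; linarith), Nat.cast_succ]
    rw [hunion] at hF ⊢
    have hdisj : Disjoint (Ico 0 ((N : ℝ) / 2 ^ s)) (dyadicCell s N) := Ico_disjoint_Ico_same
    rw [setIntegral_union hdisj (measurableSet_dyadicCell s N) hF.left_of_union
      hF.right_of_union, ih hF.left_of_union, Finset.sum_range_succ]

lemma natCast_two_pow_add_div (n j : ℕ) : ((2 ^ (n + j) : ℕ) : ℝ) / 2 ^ n = 2 ^ j := by
  rw [Nat.cast_pow, Nat.cast_ofNat, pow_add, mul_div_cancel_left₀ _ (by positivity)]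

section

variable {f g u : ℝ → ℝ}

lemma walshTransform_indicator_Ico (hf : Integrable f μplus) (n j : ℕ) {ξ : ℝ} (hξ : 0 ≤ ξ)
    (hξn : ξ < 2 ^ n) :
    walshTransform ((Ico 0 (2 ^ j)).indicator f) ξ =
      discreteWalsh (n + j) (fun a => ∫ x in dyadicCell n a, f x ∂μplus) ⌊ξ * 2 ^ j⌋₊ := by
  have hsplit : walshTransform ((Ico 0 (2 ^ j)).indicator f) ξ =
      ∑ a ∈ Finset.range (2 ^ (n + j)), ∫ x in dyadicCell n a, walshKernel ξ x * f x ∂μplus := by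
    rw [← setIntegral_Ico_eq_sum_dyadicCell _ (integrable_walshKernel_mul hf ξ).integrableOn,
      natCast_two_pow_add_div, ← integral_indicator measurableSet_Ico]
    simp only [walshTransform, indicator_mul_right]
  rw [hsplit, discreteWalsh]
  refine Finset.sum_congr rfl fun a ha => ?_
  rw [← integral_const_mul]
  refine setIntegral_congr_fun (measurableSet_dyadicCell n a) fun x hx => ?_
  obtain ⟨hx0, hxj⟩ := dyadicCell_subset_Ico (Finset.mem_range.1 ha) hx
  rw [natCast_two_pow_add_div] at hxj
  simp only [walshKernel_eq_walshMatrix n j hξ hξn hx0 hxj, floor_eq_of_mem_dyadicCell hx]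

lemma integrableOn_mul_walshTransform_mul_walshTransform (hf : Integrable f μplus)
    (hg : Integrable g μplus) (hu : Measurable u) {A : ℝ} (hA : ∀ ξ, |u ξ| ≤ A) {s : Set ℝ}
    (hs : μplus s ≠ ∞) :
    IntegrableOn (fun ξ => u ξ * walshTransform f ξ * walshTransform g ξ) s μplus := by
  refine IntegrableOn.of_bound hs.lt_top
    ((hu.aestronglyMeasurable.mul (aestronglyMeasurable_walshTransform hf)).mul
      (aestronglyMeasurable_walshTransform hg)).restrict
    (A * (∫ x, |f x| ∂μplus) * ∫ x, |g x| ∂μplus) (Eventually.of_forall fun ξ => ?_)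
  have hA0 : 0 ≤ A := (abs_nonneg _).trans (hA ξ)
  rw [norm_mul, norm_mul]
  exact mul_le_mul (mul_le_mul (hA ξ) (abs_walshTransform_le hf ξ) (norm_nonneg _) hA0)
    (abs_walshTransform_le hg ξ) (norm_nonneg _) (by positivity)

lemma setIntegral_mul_walshTransform_indicator_Ico (hf : Integrable f μplus)
    (hg : Integrable g μplus) (hu : Measurable u) {A : ℝ} (hA : ∀ ξ, |u ξ| ≤ A) (n j : ℕ) :
    ∫ ξ in Ico 0 (2 ^ n), u ξ * walshTransform ((Ico 0 (2 ^ j)).indicator f) ξ *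
        walshTransform ((Ico 0 (2 ^ j)).indicator g) ξ ∂μplus =
      ∑ b ∈ Finset.range (2 ^ (n + j)), (∫ ξ in dyadicCell j b, u ξ ∂μplus) *
        discreteWalsh (n + j) (fun a => ∫ x in dyadicCell n a, f x ∂μplus) b *
        discreteWalsh (n + j) (fun a => ∫ x in dyadicCell n a, g x ∂μplus) b := by
  have hend : (2 : ℝ) ^ n = ((2 ^ (n + j) : ℕ) : ℝ) / 2 ^ j := by
    rw [add_comm, natCast_two_pow_add_div]
  rw [hend, setIntegral_Ico_eq_sum_dyadicCell _
    (integrableOn_mul_walshTransform_mul_walshTransform (hf.indicator measurableSet_Ico)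
      (hg.indicator measurableSet_Ico) hu hA (μplus_Ico_ne_top _ _))]
  refine Finset.sum_congr rfl fun b hb => ?_
  rw [← integral_mul_const, ← integral_mul_const]
  refine setIntegral_congr_fun (measurableSet_dyadicCell j b) fun ξ hξ => ?_
  obtain ⟨hξ0, hξn⟩ := dyadicCell_subset_Ico (Finset.mem_range.1 hb) hξ
  rw [← hend] at hξn
  simp only [walshTransform_indicator_Ico hf n j hξ0 hξn,
    walshTransform_indicator_Ico hg n j hξ0 hξn, floor_eq_of_mem_dyadicCell hξ]

end

/-! ### Bilinear forms of Walsh multipliers -/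

section

variable {α E : Type*} {mα : MeasurableSpace α} [NormedAddCommGroup E] {μ : Measure α} {p q : ℝ}
  {f : α → E}

lemma lpNorm_ofReal_rpow (hp : 0 < p) (hf : AEStronglyMeasurable f μ) :
    lpNorm f (ENNReal.ofReal p) μ ^ p = ∫ x, ‖f x‖ ^ p ∂μ := by
  rw [lpNorm_eq_integral_norm_rpow_toReal (ENNReal.ofReal_pos.2 hp).ne' ENNReal.ofReal_ne_top hf,
    ENNReal.toReal_ofReal hp.le,
    Real.rpow_inv_rpow (integral_nonneg fun x => by positivity) hp.ne']

lemma integrable_norm_rpow_of_memLp (hp : 0 < p) (hf : MemLp f (ENNReal.ofReal p) μ) :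
    Integrable (fun x => ‖f x‖ ^ p) μ := by
  simpa only [ENNReal.toReal_ofReal hp.le] using
    hf.integrable_norm_rpow (ENNReal.ofReal_pos.2 hp).ne' ENNReal.ofReal_ne_top

lemma norm_setIntegral_rpow_le [NormedSpace ℝ E] (hpq : p.HolderConjugate q) {s : Set α}
    (hs : μ s ≠ ∞) (hf : MemLp f (ENNReal.ofReal p) μ) :
    ‖∫ x in s, f x ∂μ‖ ^ p ≤ (∫ x in s, ‖f x‖ ^ p ∂μ) * (μ.real s ^ (1 / q)) ^ p := by
  have : IsFiniteMeasure (μ.restrict s) := ⟨by simpa using hs.lt_top⟩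
  have holder := integral_mul_norm_le_Lp_mul_Lq hpq (hf.restrict s).norm
    (memLp_const (1 : ℝ) (μ := μ.restrict s))
  simp only [norm_norm, norm_one, mul_one, Real.one_rpow, integral_const, smul_eq_mul,
    measureReal_restrict_apply_univ] at holder
  have hint : 0 ≤ ∫ x in s, ‖f x‖ ^ p ∂μ := integral_nonneg fun x => by positivity
  calc ‖∫ x in s, f x ∂μ‖ ^ p
      ≤ ((∫ x in s, ‖f x‖ ^ p ∂μ) ^ (1 / p) * μ.real s ^ (1 / q)) ^ p :=
        Real.rpow_le_rpow (norm_nonneg _) ((norm_integral_le_integral_norm _).trans holder)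
          hpq.nonneg
    _ = (∫ x in s, ‖f x‖ ^ p ∂μ) * (μ.real s ^ (1 / q)) ^ p := by
        rw [Real.mul_rpow (by positivity) (by positivity), one_div p,
          Real.rpow_inv_rpow hint hpq.ne_zero]

end

lemma lpNormRange_setIntegral_dyadicCell_le {p q : ℝ} (hpq : p.HolderConjugate q) {f : ℝ → ℝ}
    (hf : MemLp f (ENNReal.ofReal p) μplus) (n N : ℕ) :
    lpNormRange N p (fun a => ∫ x in dyadicCell n a, f x ∂μplus) ≤
      lpNorm f (ENNReal.ofReal p) μplus * (1 / 2 ^ n) ^ (1 / q) := by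
  have hint := integrable_norm_rpow_of_memLp hpq.pos hf
  have hsum : ∑ a ∈ Finset.range N, |∫ x in dyadicCell n a, f x ∂μplus| ^ p ≤
      (lpNorm f (ENNReal.ofReal p) μplus * (1 / 2 ^ n) ^ (1 / q)) ^ p :=
    calc ∑ a ∈ Finset.range N, |∫ x in dyadicCell n a, f x ∂μplus| ^ p
        ≤ ∑ a ∈ Finset.range N,
            (∫ x in dyadicCell n a, ‖f x‖ ^ p ∂μplus) * ((1 / 2 ^ n) ^ (1 / q)) ^ p := by
          refine Finset.sum_le_sum fun a _ => ?_
          rw [← μplus_real_dyadicCell n a]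
          exact norm_setIntegral_rpow_le hpq (μplus_dyadicCell_ne_top n a) hf
      _ = (∫ x in Ico 0 ((N : ℝ) / 2 ^ n), ‖f x‖ ^ p ∂μplus) * ((1 / 2 ^ n) ^ (1 / q)) ^ p := by
          rw [setIntegral_Ico_eq_sum_dyadicCell n hint.integrableOn, Finset.sum_mul]
      _ ≤ (∫ x, ‖f x‖ ^ p ∂μplus) * ((1 / 2 ^ n) ^ (1 / q)) ^ p := by
          refine mul_le_mul_of_nonneg_right (setIntegral_le_integral hint ?_) (by positivity)
          exact Eventually.of_forall fun x => by positivity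
      _ = (lpNorm f (ENNReal.ofReal p) μplus * (1 / 2 ^ n) ^ (1 / q)) ^ p := by
          rw [Real.mul_rpow lpNorm_nonneg (by positivity), lpNorm_ofReal_rpow hpq.pos hf.1]
  rw [lpNormRange, one_div p]
  exact (Real.rpow_inv_le_iff_of_pos (Finset.sum_nonneg fun a _ => by positivity)
    (mul_nonneg lpNorm_nonneg (by positivity)) hpq.pos).2 hsum

lemma setIntegral_dyadicCell_eq (u : ℝ → ℝ) (j b : ℕ) :
    ∫ ξ in dyadicCell j b, u ξ ∂μplus = 1 / 2 ^ j * ⨍ ξ in dyadicCell j b, u ξ ∂μplus := by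
  rw [← measure_smul_setAverage u (μplus_dyadicCell_ne_top j b), μplus_real_dyadicCell, smul_eq_mul]

lemma abs_setAverage_dyadicCell_le {u : ℝ → ℝ} {A : ℝ} (hA : ∀ ξ, |u ξ| ≤ A) (j b : ℕ) :
    |⨍ ξ in dyadicCell j b, u ξ ∂μplus| ≤ A := by
  have hint : ‖∫ ξ in dyadicCell j b, u ξ ∂μplus‖ ≤ A * μplus.real (dyadicCell j b) :=
    norm_setIntegral_le_of_norm_le_const (μplus_dyadicCell_ne_top j b).lt_top fun ξ _ => hA ξ
  rw [Real.norm_eq_abs, setIntegral_dyadicCell_eq, μplus_real_dyadicCell, abs_mul,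
    abs_of_pos (by positivity), mul_comm A] at hint
  exact le_of_mul_le_mul_left hint (by positivity)

lemma HasBreaks.setAverage_dyadicCell {u : ℝ → ℝ} {Ξ : Finset ℝ} (hu : HasBreaks u Ξ) (j : ℕ) :
    HasBreaks (fun b => ⨍ ξ in dyadicCell j b, u ξ ∂μplus) (Ξ.image fun z => ⌊z * 2 ^ j⌋₊) := by
  intro a b hab hΞ
  have hpow : (0 : ℝ) < 2 ^ j := by positivity
  have hconst {c : ℕ} (hac : a ≤ c) (hcb : c ≤ b) :
      ∀ t ∈ dyadicCell j c, u t = u (a / 2 ^ j) := by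
    intro t ht
    refine (hu (le_trans (by gcongr) ht.1) fun z hz ⟨haz, hzt⟩ => ?_).symm
    refine hΞ _ (Finset.mem_image_of_mem _ hz) ⟨Nat.le_floor ((div_le_iff₀ hpow).1 haz), ?_⟩
    calc ⌊z * 2 ^ j⌋₊ ≤ ⌊t * 2 ^ j⌋₊ := by gcongr
      _ = c := floor_eq_of_mem_dyadicCell ht
      _ ≤ b := hcb
  have havg {c : ℕ} (hac : a ≤ c) (hcb : c ≤ b) :
      ⨍ ξ in dyadicCell j c, u ξ ∂μplus = u (a / 2 ^ j) := by
    rw [setAverage_congr_fun (measurableSet_dyadicCell j c)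
      (Eventually.of_forall (hconst hac hcb)),
      setAverage_const (μplus_dyadicCell_ne_zero j c) (μplus_dyadicCell_ne_top j c)]
  exact (havg le_rfl hab).trans (havg hab le_rfl).symm

/-- The bilinear form `∫ u ĝ ĥ` of the Walsh multiplier `u` is bounded by `B ‖g‖_p ‖h‖_q`. The
frequencies are truncated because the form need not converge absolutely for bounded `u`. -/
def WalshFormBound (p q : ℝ) (u : ℝ → ℝ) (B : ℝ) : Prop :=
  ∀ ⦃g h : ℝ → ℝ⦄, Integrable g μplus → Integrable h μplus →
    MemLp g (ENNReal.ofReal p) μplus → MemLp h (ENNReal.ofReal q) μplus →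
    ∀ n : ℕ, |∫ ξ in Ico 0 (2 ^ n), u ξ * walshTransform g ξ * walshTransform h ξ ∂μplus| ≤
      B * (lpNorm g (ENNReal.ofReal p) μplus * lpNorm h (ENNReal.ofReal q) μplus)

lemma aecover_μplus_Ico_two_pow : AECover μplus atTop fun n : ℕ => Ico (0 : ℝ) (2 ^ n) where
  ae_eventually_mem := by
    filter_upwards [ae_μplus_pos] with x hx
    filter_upwards [(tendsto_pow_atTop_atTop_of_one_lt (one_lt_two (α := ℝ))).eventually_gt_atTop x]
      with n hn using ⟨hx.le, hn⟩
  measurableSet n := measurableSet_Ico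

lemma tendsto_walshTransform_indicator {f : ℝ → ℝ} (hf : Integrable f μplus) (ξ : ℝ) :
    Tendsto (fun j : ℕ => walshTransform ((Ico 0 (2 ^ j)).indicator f) ξ) atTop
      (nhds (walshTransform f ξ)) := by
  refine (aecover_μplus_Ico_two_pow.integral_tendsto_of_countably_generated
    (integrable_walshKernel_mul hf ξ)).congr fun j => ?_
  simp only [walshTransform, ← indicator_mul_right, integral_indicator measurableSet_Ico]

lemma abs_walshTransform_indicator_le {f : ℝ → ℝ} (hf : Integrable f μplus) {s : Set ℝ}
    (hs : MeasurableSet s) (ξ : ℝ) :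
    |walshTransform (s.indicator f) ξ| ≤ ∫ x, |f x| ∂μplus :=
  (abs_walshTransform_le (hf.indicator hs) ξ).trans
    (integral_mono (hf.indicator hs).abs hf.abs fun _ => norm_indicator_le_norm_self f _)

lemma tendsto_setIntegral_mul_walshTransform_indicator {f g u : ℝ → ℝ} (hf : Integrable f μplus)
    (hg : Integrable g μplus) (hu : Measurable u) {A : ℝ} (hA : ∀ ξ, |u ξ| ≤ A) {s : Set ℝ}
    (hs : μplus s ≠ ∞) :
    Tendsto (fun j : ℕ => ∫ ξ in s, u ξ * walshTransform ((Ico 0 (2 ^ j)).indicator f) ξ *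
        walshTransform ((Ico 0 (2 ^ j)).indicator g) ξ ∂μplus) atTop
      (nhds (∫ ξ in s, u ξ * walshTransform f ξ * walshTransform g ξ ∂μplus)) := by
  have hA0 : 0 ≤ A := (abs_nonneg _).trans (hA 0)
  refine tendsto_integral_of_dominated_convergence
    (fun _ => A * (∫ x, |f x| ∂μplus) * ∫ x, |g x| ∂μplus)
    (fun j => (integrableOn_mul_walshTransform_mul_walshTransform (hf.indicator measurableSet_Ico)
      (hg.indicator measurableSet_Ico) hu hA hs).1)
    (integrableOn_const hs) (fun _ => Eventually.of_forall fun ξ => ?_)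
    (Eventually.of_forall fun ξ => ((tendsto_walshTransform_indicator hf ξ).const_mul (u ξ)).mul
      (tendsto_walshTransform_indicator hg ξ))
  rw [norm_mul, norm_mul]
  exact mul_le_mul (mul_le_mul (hA ξ) (abs_walshTransform_indicator_le hf measurableSet_Ico ξ)
    (norm_nonneg _) hA0) (abs_walshTransform_indicator_le hg measurableSet_Ico ξ)
    (norm_nonneg _) (by positivity)

lemma exists_walshFormBound_of_hasBreaks {p q : ℝ} (hpq : p.HolderConjugate q) :
    ∃ C, 0 < C ∧ ∀ (u : ℝ → ℝ) (Ξ : Finset ℝ) (M A : ℝ), HasBreaks u Ξ → 1 ≤ M →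
      (Ξ.card : ℝ) ≤ M → 0 < A → (∀ ξ, |u ξ| ≤ A) →
      WalshFormBound p q u (C * M ^ |1 / p - 1 / 2| * A) := by
  obtain ⟨C, hC, hdiscrete⟩ := exists_abs_sum_mul_discreteWalsh_le hpq
  refine ⟨C, hC, fun u Ξ M A hu hM hΞ hA huA g h hg hh hgp hhq n => ?_⟩
  refine le_of_tendsto' (tendsto_setIntegral_mul_walshTransform_indicator hg hh hu.measurable huA
    (μplus_Ico_ne_top 0 (2 ^ n))).abs fun j => ?_
  have hcard : ((Ξ.image fun z => ⌊z * 2 ^ j⌋₊).card : ℝ) ≤ M :=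
    le_trans (by exact_mod_cast Finset.card_image_le) hΞ
  have hscale : (1 / 2 ^ n : ℝ) ^ (1 / q) * (1 / 2 ^ n) ^ (1 / p) = 1 / 2 ^ n := by
    rw [← Real.rpow_add (by positivity), one_div p, one_div q, add_comm, hpq.inv_add_inv_eq_one,
      Real.rpow_one]
  set G := lpNorm g (ENNReal.ofReal p) μplus
  set H := lpNorm h (ENNReal.ofReal q) μplus
  have hG : 0 ≤ G := lpNorm_nonneg
  simp only [setIntegral_mul_walshTransform_indicator_Ico hg hh hu.measurable huA,
    setIntegral_dyadicCell_eq u, mul_assoc (1 / (2 : ℝ) ^ j), ← Finset.mul_sum]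
  rw [abs_mul, abs_of_pos (by positivity)]
  calc _ ≤ 1 / 2 ^ j * (C * M ^ |1 / p - 1 / 2| * A * 2 ^ (n + j) *
          ((G * (1 / 2 ^ n) ^ (1 / q)) * (H * (1 / 2 ^ n) ^ (1 / p)))) := by
        refine mul_le_mul_of_nonneg_left ((hdiscrete _ _ _ M A (hu.setAverage_dyadicCell j) hM
          hcard hA (abs_setAverage_dyadicCell_le huA j) _ _).trans ?_) (by positivity)
        gcongr
        · exact lpNormRange_nonneg _ _ _
        · exact lpNormRange_setIntegral_dyadicCell_le hpq hgp n _
        · exact lpNormRange_setIntegral_dyadicCell_le hpq.symm hhq n _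
    _ = C * M ^ |1 / p - 1 / 2| * A * (G * H) * (2 ^ n * ((1 / 2 ^ n) ^ (1 / q) *
          (1 / 2 ^ n) ^ (1 / p))) := by rw [pow_add]; field_simp
    _ = C * M ^ |1 / p - 1 / 2| * A * (G * H) := by
        rw [hscale, mul_one_div_cancel (by positivity), mul_one]

lemma WalshFormBound.of_hasSum {p q : ℝ} {U : ℕ → ℝ → ℝ} {m : ℝ → ℝ} {A B : ℕ → ℝ} {S : ℝ}
    (hU : ∀ k, WalshFormBound p q (U k) (B k)) (hUm : ∀ k, Measurable (U k))
    (hA : ∀ k ξ, |U k ξ| ≤ A k) (hAsum : Summable A) (hB : HasSum B S)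
    (hm : ∀ ξ, HasSum (fun k => U k ξ) (m ξ)) : WalshFormBound p q m S := by
  intro g h hg hh hgp hhq n
  have hforms : HasSum
      (fun k => ∫ ξ in Ico 0 (2 ^ n), U k ξ * walshTransform g ξ * walshTransform h ξ ∂μplus)
      (∫ ξ in Ico 0 (2 ^ n), m ξ * walshTransform g ξ * walshTransform h ξ ∂μplus) := by
    refine hasSum_integral_of_dominated_convergence
      (fun k _ => A k * (∫ x, |g x| ∂μplus) * ∫ x, |h x| ∂μplus)
      (fun k => (integrableOn_mul_walshTransform_mul_walshTransform hg hh (hUm k) (hA k)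
        (μplus_Ico_ne_top _ _)).1) (fun k => Eventually.of_forall fun ξ => ?_)
      (Eventually.of_forall fun _ => (hAsum.mul_right _).mul_right _)
      (integrableOn_const (μplus_Ico_ne_top _ _))
      (Eventually.of_forall fun ξ => ((hm ξ).mul_right _).mul_right _)
    have hAk : 0 ≤ A k := (abs_nonneg _).trans (hA k ξ)
    rw [norm_mul, norm_mul]
    exact mul_le_mul (mul_le_mul (hA k ξ) (abs_walshTransform_le hg ξ) (norm_nonneg _) hAk)
      (abs_walshTransform_le hh ξ) (norm_nonneg _) (by positivity)
  exact hforms.norm_le_of_bounded (hB.mul_right _) fun k => hU k hg hh hgp hhq n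

lemma WalshFormBound.abs_integral_le {p q : ℝ} {g h m : ℝ → ℝ} {B : ℝ}
    (hm : WalshFormBound p q m B) (hg : Integrable g μplus) (hh : Integrable h μplus)
    (hgp : MemLp g (ENNReal.ofReal p) μplus) (hhq : MemLp h (ENNReal.ofReal q) μplus)
    (hmg : Integrable (fun ξ => m ξ * walshTransform g ξ) μplus) :
    |∫ ξ, m ξ * walshTransform g ξ * walshTransform h ξ ∂μplus| ≤
      B * (lpNorm g (ENNReal.ofReal p) μplus * lpNorm h (ENNReal.ofReal q) μplus) :=
  le_of_tendsto' (aecover_μplus_Ico_two_pow.integral_tendsto_of_countably_generated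
    (integrable_mul_walshTransform hmg hh)).abs (hm hg hh hgp hhq)

/-! ### Duality -/

/-- The duality map of `L^p`: multiplying `F` by `dualPower p ∘ F` gives `|F|^p`, and for conjugate
exponents `p`, `q` the `q`-th power of `|dualPower p ∘ F|` is again `|F|^p`. -/
def dualPower (p t : ℝ) : ℝ := t * |t| ^ (p - 2)

lemma measurable_dualPower (p : ℝ) : Measurable (dualPower p) :=
  measurable_id.mul (measurable_id.abs.pow_const _)

lemma dualPower_zero (p : ℝ) : dualPower p 0 = 0 := zero_mul _

lemma mul_dualPower {p : ℝ} (hp : p ≠ 0) (t : ℝ) : t * dualPower p t = |t| ^ p := by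
  rcases eq_or_ne t 0 with rfl | ht
  · rw [zero_mul, abs_zero, Real.zero_rpow hp]
  · rw [dualPower, ← mul_assoc, ← abs_mul_abs_self, ← sq, ← Real.rpow_two,
      ← Real.rpow_add (abs_pos.2 ht), add_sub_cancel]

lemma abs_dualPower {p : ℝ} (hp : p ≠ 1) (t : ℝ) : |dualPower p t| = |t| ^ (p - 1) := by
  rcases eq_or_ne t 0 with rfl | _
  · rw [dualPower_zero, abs_zero, Real.zero_rpow (sub_ne_zero.2 hp)]
  · rw [dualPower, abs_mul, abs_of_nonneg (Real.rpow_nonneg (abs_nonneg t) _),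
      ← Real.rpow_one_add' (abs_nonneg t) (by rw [← add_sub_assoc]; contrapose! hp; linarith)]
    ring_nf

section

variable {α : Type*} {mα : MeasurableSpace α} {μ : Measure α} {p q : ℝ} {F : α → ℝ}

lemma lpNorm_dualPower (hpq : p.HolderConjugate q) (hF : AEStronglyMeasurable F μ) :
    lpNorm (fun x => dualPower p (F x)) (ENNReal.ofReal q) μ =
      lpNorm F (ENNReal.ofReal p) μ ^ (p - 1) := by
  have hdual : AEStronglyMeasurable (fun x => dualPower p (F x)) μ :=
    ((measurable_dualPower p).comp_aemeasurable hF.aemeasurable).aestronglyMeasurable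
  refine (Real.rpow_left_inj lpNorm_nonneg (Real.rpow_nonneg lpNorm_nonneg _)
    hpq.symm.ne_zero).1 ?_
  rw [lpNorm_ofReal_rpow hpq.symm.pos hdual, ← Real.rpow_mul lpNorm_nonneg, hpq.sub_one_mul_conj,
    lpNorm_ofReal_rpow hpq.pos hF]
  simp only [Real.norm_eq_abs, abs_dualPower hpq.lt.ne', ← Real.rpow_mul (abs_nonneg _),
    hpq.sub_one_mul_conj]

lemma lpNorm_le_of_integral_mul_dualPower_le (hpq : p.HolderConjugate q)
    (hF : AEStronglyMeasurable F μ) {B : ℝ} (hB : 0 ≤ B)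
    (hdual : ∫ x, F x * dualPower p (F x) ∂μ ≤
      B * lpNorm (fun x => dualPower p (F x)) (ENNReal.ofReal q) μ) :
    lpNorm F (ENNReal.ofReal p) μ ≤ B := by
  rcases (lpNorm_nonneg : 0 ≤ lpNorm F (ENNReal.ofReal p) μ).eq_or_lt with h0 | hpos
  · rwa [← h0]
  simp only [mul_dualPower hpq.ne_zero, ← Real.norm_eq_abs (F _),
    ← lpNorm_ofReal_rpow hpq.pos hF, lpNorm_dualPower hpq hF] at hdual
  refine le_of_mul_le_mul_right ?_ (Real.rpow_pos_of_pos hpos (p - 1))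
  rwa [← Real.rpow_one_add' lpNorm_nonneg (by simpa using hpq.ne_zero), add_sub_cancel]

lemma eLpNorm_indicator_le_of_forall_abs_integral_mul_le (hpq : p.HolderConjugate q)
    (hF : AEStronglyMeasurable F μ) {A B : ℝ} (hA : ∀ x, |F x| ≤ A) (hB : 0 ≤ B)
    (hdual : ∀ h, Integrable h μ → MemLp h (ENNReal.ofReal q) μ →
      |∫ x, F x * h x ∂μ| ≤ B * lpNorm h (ENNReal.ofReal q) μ)
    {s : Set α} (hs : MeasurableSet s) (hμs : μ s ≠ ∞) :
    eLpNorm (s.indicator F) (ENNReal.ofReal p) μ ≤ ENNReal.ofReal B := by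
  have : IsFiniteMeasure (μ.restrict s) := ⟨by simpa using hμs.lt_top⟩
  set h : α → ℝ := fun x => dualPower p (s.indicator F x)
  have h_indicator : h = s.indicator fun x => dualPower p (F x) :=
    (indicator_comp_of_zero (dualPower_zero p)).symm
  have hF_memLp : MemLp (s.indicator F) (ENNReal.ofReal p) μ :=
    (memLp_indicator_iff_restrict hs).2 (MemLp.of_bound hF.restrict A (Eventually.of_forall hA))
  have h_memLp (e : ℝ≥0∞) : MemLp h e μ := by
    rw [h_indicator, memLp_indicator_iff_restrict hs]
    have hdual_meas : AEStronglyMeasurable (fun x => dualPower p (F x)) μ :=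
      ((measurable_dualPower p).comp_aemeasurable hF.aemeasurable).aestronglyMeasurable
    refine MemLp.of_bound hdual_meas.restrict (A ^ (p - 1)) (Eventually.of_forall fun x => ?_)
    rw [Real.norm_eq_abs, abs_dualPower hpq.lt.ne']
    exact Real.rpow_le_rpow (abs_nonneg _) (hA x) hpq.sub_one_pos.le
  have h_mul (x : α) : s.indicator F x * h x = F x * h x := by
    by_cases hx : x ∈ s <;> simp [h_indicator, hx]
  rw [← ofReal_lpNorm hF_memLp]
  refine ENNReal.ofReal_le_ofReal
    (lpNorm_le_of_integral_mul_dualPower_le hpq hF_memLp.1 hB ?_)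
  calc ∫ x, s.indicator F x * h x ∂μ = ∫ x, F x * h x ∂μ := by simp only [h_mul]
    _ ≤ B * lpNorm h (ENNReal.ofReal q) μ := (le_abs_self _).trans
      (hdual h (memLp_one_iff_integrable.1 (h_memLp 1)) (h_memLp _))

lemma eLpNorm_le_of_forall_abs_integral_mul_le [SigmaFinite μ] (hpq : p.HolderConjugate q)
    (hF : AEStronglyMeasurable F μ) {A B : ℝ} (hA : ∀ x, |F x| ≤ A) (hB : 0 ≤ B)
    (hdual : ∀ h, Integrable h μ → MemLp h (ENNReal.ofReal q) μ →
      |∫ x, F x * h x ∂μ| ≤ B * lpNorm h (ENNReal.ofReal q) μ) :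
    eLpNorm F (ENNReal.ofReal p) μ ≤ ENNReal.ofReal B := by
  have hmeas (n : ℕ) : MeasurableSet (spanningSets μ n) := measurableSet_spanningSets μ n
  have hlim (x : α) :
      Tendsto (fun n => (spanningSets μ n).indicator F x) atTop (nhds (F x)) := by
    have h := (monotone_spanningSets μ).tendsto_indicator (spanningSets μ) F x
    rw [iUnion_spanningSets, indicator_univ] at h
    exact h.mono_right (pure_le_nhds _)
  calc eLpNorm F (ENNReal.ofReal p) μ
      ≤ liminf (fun n => eLpNorm ((spanningSets μ n).indicator F) (ENNReal.ofReal p) μ) atTop :=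
        Lp.eLpNorm_lim_le_liminf_eLpNorm (fun n => hF.indicator (hmeas n)) F
          (Eventually.of_forall hlim)
    _ ≤ liminf (fun _ : ℕ => ENNReal.ofReal B) atTop :=
        liminf_le_liminf (Eventually.of_forall fun n =>
          eLpNorm_indicator_le_of_forall_abs_integral_mul_le hpq hF hA hB hdual (hmeas n)
            (measure_spanningSets_lt_top μ n).ne)
    _ = ENNReal.ofReal B := liminf_const _

end

/-! ### Walsh multipliers of bounded variation -/

section

variable {p q B : ℝ} {m : ℝ → ℝ}

lemma WalshFormBound.eLpNorm_walshTransform_le (hpq : p.HolderConjugate q) (hB : 0 ≤ B)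
    (hm : WalshFormBound p q m B) {g : ℝ → ℝ} (hg : Integrable g μplus)
    (hgp : MemLp g (ENNReal.ofReal p) μplus)
    (hmg : Integrable (fun ξ => m ξ * walshTransform g ξ) μplus) :
    eLpNorm (walshTransform fun ξ => m ξ * walshTransform g ξ) (ENNReal.ofReal p) μplus ≤
      ENNReal.ofReal (B * lpNorm g (ENNReal.ofReal p) μplus) := by
  refine eLpNorm_le_of_forall_abs_integral_mul_le hpq (aestronglyMeasurable_walshTransform hmg)
    (abs_walshTransform_le hmg) (mul_nonneg hB lpNorm_nonneg) fun h hh hhq => ?_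
  rw [integral_walshTransform_mul hmg hh, mul_assoc]
  exact hm.abs_integral_le hg hh hgp hhq hmg

lemma walshFT_mul_walshFT_ae_eq (m g : ℝ → ℝ) :
    (walshFT fun ξ => m ξ * walshFT g ξ) =ᵐ[μplus]
      walshTransform fun ξ => m ξ * walshTransform g ξ := by
  refine (walshFT_ae_eq _).trans (Eventually.of_forall fun x => integral_congr_ae ?_)
  filter_upwards [walshFT_ae_eq g] with ξ hξ
  rw [hξ]

lemma WalshFormBound.Mq_le (hpq : p.HolderConjugate q) (hB : 0 ≤ B)
    (hm : WalshFormBound p q m B) : Mq p m ≤ ENNReal.ofReal B := by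
  refine iSup₂_le fun g hg1 => ?_
  rw [eLpNorm_congr_ae (walshFT_mul_walshFT_ae_eq m g)]
  by_cases hmg : Integrable (fun ξ => m ξ * walshTransform g ξ) μplus
  · by_cases hg : Integrable g μplus
    · have hgp : MemLp g (ENNReal.ofReal p) μplus := ⟨hg.1, hg1 ▸ ENNReal.one_lt_top⟩
      have hg_norm : lpNorm g (ENNReal.ofReal p) μplus = 1 :=
        ENNReal.ofReal_eq_one.1 ((ofReal_lpNorm hgp).trans hg1)
      simpa only [hg_norm, mul_one] using hm.eLpNorm_walshTransform_le hpq hB hg hgp hmg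
    · have hzero : walshTransform (fun ξ => m ξ * walshTransform g ξ) = 0 := by
        ext x
        refine integral_eq_zero_of_ae ?_
        filter_upwards [ae_μplus_pos] with ξ hξ
        simp [walshTransform_of_not_integrable hg hξ.le]
      simp [hzero]
  · have hzero : walshTransform (fun ξ => m ξ * walshTransform g ξ) =ᵐ[μplus] 0 := by
      filter_upwards [ae_μplus_pos] with x hx using walshTransform_of_not_integrable hmg hx.le
    simp [eLpNorm_congr_ae hzero]

end

lemma exists_walshFormBound_of_vnorm_le {p q r : ℝ} (hpq : p.HolderConjugate q) (hr : 0 < r)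
    (hpr : |1 / p - 1 / 2| < 1 / r) :
    ∃ C, 0 < C ∧ ∀ (D : Set ℝ) (Y : Finset (Set ℝ)) (m : Set ℝ → ℝ → ℝ) (V : ℝ), 0 < V →
      Y.Nonempty → (Y : Set (Set ℝ)).PairwiseDisjoint id → (∀ v ∈ Y, v ⊆ D) →
      (∀ v ∈ Y, v.OrdConnected) → (∀ v ∈ Y, Function.support (m v) ⊆ v) →
      (∀ v ∈ Y, vnorm r D (m v) ≤ ENNReal.ofReal V) →
      WalshFormBound p q (fun ξ => ∑ v ∈ Y, m v ξ) (C * Y.card ^ |1 / p - 1 / 2| * V) := by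
  obtain ⟨C, hC, hstep⟩ := exists_walshFormBound_of_hasBreaks hpq
  set σ := |1 / p - 1 / 2|
  set ρ : ℝ := 2 ^ (-(1 / r))
  have hρ : 0 < ρ := by positivity
  have hρ1 : ρ < 1 := Real.rpow_lt_one_of_one_lt_of_neg one_lt_two (by simpa using hr)
  have hθ1 : 2 ^ σ * ρ < 1 := by
    rw [← Real.rpow_add two_pos]
    exact Real.rpow_lt_one_of_one_lt_of_neg one_lt_two (by linarith)
  have _ : 0 < 1 - 2 ^ σ * ρ := sub_pos.2 hθ1
  set K : ℝ := 1 + 2 ^ (1 / r)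
  have _ : 0 < K := by positivity
  refine ⟨C * 8 ^ σ * K * (1 - 2 ^ σ * ρ)⁻¹, by positivity,
    fun D Y m V hV hne hY hYD hYord hmv hm => ?_⟩
  obtain ⟨U, Ξ, hU, hΞ, hUA, hsum⟩ := exists_hasBreaks_hasSum hr hV hY hYD hYord hmv hm
  have hcard : (1 : ℝ) ≤ Y.card := Nat.one_le_cast.2 hne.card_pos
  have hform (k : ℕ) : WalshFormBound p q (U k) (C * (8 * Y.card * 2 ^ k) ^ σ * (K * V * ρ ^ k)) :=
    hstep (U k) (Ξ k) _ _ (hU k) (one_le_mul_of_one_le_of_one_le (by linarith)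
      (one_le_pow₀ one_le_two)) (by exact_mod_cast hΞ k) (by positivity) (hUA k)
  refine WalshFormBound.of_hasSum hform (fun k => (hU k).measurable) hUA
    ((summable_geometric_of_lt_one hρ.le hρ1).mul_left _) ?_ hsum
  have hterm (k : ℕ) : C * (8 * Y.card * 2 ^ k) ^ σ * (K * V * ρ ^ k) =
      C * 8 ^ σ * K * Y.card ^ σ * V * (2 ^ σ * ρ) ^ k := by
    rw [Real.mul_rpow (by positivity) (by positivity), Real.mul_rpow (by positivity)
      (by positivity), ← Real.rpow_pow_comm two_pos.le, mul_pow]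
    ring
  have htotal : C * 8 ^ σ * K * (1 - 2 ^ σ * ρ)⁻¹ * Y.card ^ σ * V =
      C * 8 ^ σ * K * Y.card ^ σ * V * (1 - 2 ^ σ * ρ)⁻¹ := by ring
  simp only [hterm, htotal]
  exact (hasSum_geometric_of_lt_one (by positivity) hθ1).mul_left _

lemma Mq_zero (q : ℝ) : Mq q (fun _ => 0) = 0 := by
  have hzero : (walshFT fun _ => 0) = 0 := by
    ext x
    simp [walshFT]
  simp [Mq, hzero]

lemma exists_Mq_sum_le {q r : ℝ} (hq1 : 1 < q) (hr : 0 < r) (hqr : |1 / q - 1 / 2| < 1 / r) :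
    ∃ C, 0 < C ∧ ∀ (D : Set ℝ) (Y : Finset (Set ℝ)) (m : Set ℝ → ℝ → ℝ) (V : ℝ), 0 < V →
      Y.Nonempty → (Y : Set (Set ℝ)).PairwiseDisjoint id → (∀ v ∈ Y, v ⊆ D) →
      (∀ v ∈ Y, v.OrdConnected) → (∀ v ∈ Y, Function.support (m v) ⊆ v) →
      (∀ v ∈ Y, vnorm r D (m v) ≤ ENNReal.ofReal V) →
      Mq q (fun ξ => ∑ v ∈ Y, m v ξ) ≤
        ENNReal.ofReal C * (Y.card : ℝ≥0∞) ^ |1 / q - 1 / 2| * ENNReal.ofReal V := by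
  have hqq := Real.HolderConjugate.conjExponent hq1
  obtain ⟨C, hC, hform⟩ := exists_walshFormBound_of_vnorm_le hqq hr hqr
  refine ⟨C, hC, fun D Y m V hV hne hY hYD hYord hmv hm => ?_⟩
  have hcard : 0 < (Y.card : ℝ) := Nat.cast_pos.2 hne.card_pos
  have hbound := (hform D Y m V hV hne hY hYD hYord hmv hm).Mq_le hqq (by positivity)
  rwa [ENNReal.ofReal_mul (by positivity), ENNReal.ofReal_mul hC.le,
    ← ENNReal.ofReal_rpow_of_pos hcard, ENNReal.ofReal_natCast] at hbound

theorem walsh_crs_general (q r : ℝ) (hq1 : 1 < q) (hqr : |1 / q - 1 / 2| < 1 / r) :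
    ∃ C : ℝ, 0 < C ∧ ∀ Y : Set (Set ℝ), Y.Finite → Y.PairwiseDisjoint id →
      (∀ v ∈ Y, v ⊆ Set.Ici 0 ∧ v.OrdConnected) → ∀ m : Set ℝ → ℝ → ℝ,
        (∀ v ∈ Y, ∀ x, m v x ≠ 0 → x ∈ v) →
        Mq q (fun ξ => ∑ᶠ v ∈ Y, m v ξ) ≤
          ENNReal.ofReal C * (Y.ncard : ℝ≥0∞) ^ |1 / q - 1 / 2| *
            ⨆ v ∈ Y, vnorm r (Set.Ici 0) (m v) := by
  have hr : 0 < r := one_div_pos.1 ((abs_nonneg _).trans_lt hqr)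
  obtain ⟨C, hC, hbound⟩ := exists_Mq_sum_le hq1 hr hqr
  refine ⟨C, hC, fun Y hfin hdisj hY m hm => ?_⟩
  lift Y to Finset (Set ℝ) using hfin
  have hsum (ξ : ℝ) : ∑ᶠ v ∈ (Y : Set (Set ℝ)), m v ξ = ∑ v ∈ Y, m v ξ :=
    finsum_mem_coe_finset _ _
  simp only [hsum, ncard_coe_finset]
  set S := ⨆ v ∈ (Y : Set (Set ℝ)), vnorm r (Ici 0) (m v)
  have hmS (v : Set ℝ) (hv : v ∈ Y) : vnorm r (Ici 0) (m v) ≤ S :=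
    le_iSup₂ (f := fun v (_ : v ∈ (Y : Set (Set ℝ))) => vnorm r (Ici 0) (m v)) v hv
  by_cases hzero : ∀ v ∈ Y, m v = 0
  · have hsum_zero (ξ : ℝ) : ∑ v ∈ Y, m v ξ = 0 :=
      Finset.sum_eq_zero fun v hv => congrFun (hzero v hv) ξ
    simp only [hsum_zero, Mq_zero, zero_le]
  push Not at hzero
  obtain ⟨v₀, hv₀, hmv₀⟩ := hzero
  have hS : S ≠ 0 := fun hS => hmv₀ (eq_zero_of_vnorm_eq_zero
    (Subset.trans (hm v₀ hv₀) (hY v₀ hv₀).1) (nonpos_iff_eq_zero.1 (hS ▸ hmS v₀ hv₀)))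
  rcases eq_or_ne S ⊤ with hS_top | hS_top
  · have hcard : (Y.card : ℝ≥0∞) ≠ 0 := Nat.cast_ne_zero.2 (Finset.card_ne_zero_of_mem hv₀)
    simp [hS_top, ENNReal.mul_top, hC, hcard]
  · rw [← ENNReal.ofReal_toReal hS_top] at hmS ⊢
    exact hbound (Ici 0) Y m S.toReal (ENNReal.toReal_pos hS hS_top) ⟨v₀, hv₀⟩ hdisj
      (fun v hv => (hY v hv).1) (fun v hv => (hY v hv).2) hm hmS

/-- Lemma 3.5: for `1 < q < ∞` with `|1/q - 1/2| < 1/r` and pairwise disjoint intervals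
`Υ` carrying functions `m_υ` supported on `υ` of bounded `r`-variation,
`‖Σ_υ m_υ‖_{M^q} ≤ C_{q,r,ε} |Υ|^{|1/q - 1/2| + ε} sup_υ ‖m_υ‖_{V^r}`. -/
theorem walsh_crs (q r eps : ℝ) (hq1 : 1 < q) (hr : 1 ≤ r)
    (hqr : |1 / q - 1 / 2| < 1 / r) (heps : 0 < eps) :
    ∃ C : ℝ, 0 < C ∧ ∀ Y : Set (Set ℝ), Y.Finite → Y.PairwiseDisjoint id →
      (∀ v ∈ Y, v ⊆ Set.Ici 0 ∧ v.OrdConnected) → ∀ m : Set ℝ → ℝ → ℝ,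
        (∀ v ∈ Y, (∀ x, m v x ≠ 0 → x ∈ v) ∧ vnorm r (Set.Ici 0) (m v) ≠ ⊤) →
        Mq q (fun ξ => ∑ᶠ v ∈ Y, m v ξ) ≤
          ENNReal.ofReal C * (Y.ncard : ℝ≥0∞) ^ (|1 / q - 1 / 2| + eps) *
            ⨆ v ∈ Y, vnorm r (Set.Ici 0) (m v) := by
  obtain ⟨C, hC, hbound⟩ := walsh_crs_general q r hq1 hqr
  refine ⟨C, hC, fun Y hfin hdisj hY m hm => ?_⟩
  rcases Y.eq_empty_or_nonempty with rfl | hne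
  · simpa using hbound ∅ hfin hdisj hY m fun v hv => (hm v hv).1
  have hcard : (1 : ℝ≥0∞) ≤ Y.ncard := Nat.one_le_cast.2 ((ncard_pos hfin).2 hne)
  refine (hbound Y hfin hdisj hY m fun v hv => (hm v hv).1).trans ?_
  gcongr
  exact le_add_of_nonneg_right heps.le

end
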